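/- arXiv:1506.03430 — 6 statements merged into one kernel-verified Lean document; each statement's English description precedes it below -/
import Mathlib

section
/- For every y ∈ ℝ^{n1×n2}, every θ* ∈ ℝ^{n1×n2}, and every θ ∈ M, writing ε = y − θ* and letting θ̂ be the Euclidean projection of y onto M, one has the deterministic inequality ||θ̂ − θ*||² ≤ ||θ* − θ||² + || Π(ε, T_M(θ)) ||², where Π(ε, T_M(θ)) is the Euclidean projection of ε onto the tangent cone T_M(θ). -/
open MeasureTheory ProbabilityTheory

noncomputable section

/-- The set of isotonic (coordinatewise nondecreasing) `n1 × n2` matrices. -/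
def Isotonic {n1 n2 : ℕ} (θ : Fin n1 → Fin n2 → ℝ) : Prop :=
  ∀ ⦃i k : Fin n1⦄ ⦃j l : Fin n2⦄, i ≤ k → j ≤ l → θ i j ≤ θ k l

/-- Squared Frobenius norm of a matrix. -/
def frobSq {n1 n2 : ℕ} (θ : Fin n1 → Fin n2 → ℝ) : ℝ :=
  ∑ i, ∑ j, θ i j ^ 2

/-- The tangent cone of the isotonic cone `M` at `θ`: the closure of
`{α (u − θ) : α > 0, u ∈ M}`. -/
def tangentCone {n1 n2 : ℕ} (θ : Fin n1 → Fin n2 → ℝ) : Set (Fin n1 → Fin n2 → ℝ) :=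
  closure {v | ∃ α : ℝ, 0 < α ∧ ∃ u, Isotonic u ∧ v = α • (u - θ)}

/-- Frobenius inner product of two matrices. -/
def frobInner {n1 n2 : ℕ} (a b : Fin n1 → Fin n2 → ℝ) : ℝ :=
  ∑ i, ∑ j, a i j * b i j

lemma frobSq_nonneg {n1 n2 : ℕ} (a : Fin n1 → Fin n2 → ℝ) : 0 ≤ frobSq a :=
  Finset.sum_nonneg fun _ _ => Finset.sum_nonneg fun _ _ => sq_nonneg _

lemma frobSq_sub_smul {n1 n2 : ℕ} (a b : Fin n1 → Fin n2 → ℝ) (t : ℝ) :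
    frobSq (a - t • b) = frobSq a - 2 * t * frobInner a b + t ^ 2 * frobSq b := by
  simp only [frobSq, frobInner, Finset.mul_sum, ← Finset.sum_sub_distrib,
    ← Finset.sum_add_distrib, Pi.sub_apply, Pi.smul_apply, smul_eq_mul]
  exact Finset.sum_congr rfl fun _ _ => Finset.sum_congr rfl fun _ _ => by ring

lemma frobSq_sub {n1 n2 : ℕ} (a b : Fin n1 → Fin n2 → ℝ) :
    frobSq (a - b) = frobSq a - 2 * frobInner a b + frobSq b := by
  simpa using frobSq_sub_smul a b 1

lemma frobInner_sub_left {n1 n2 : ℕ} (a b c : Fin n1 → Fin n2 → ℝ) :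
    frobInner (a - b) c = frobInner a c - frobInner b c := by
  simp only [frobInner, ← Finset.sum_sub_distrib, Pi.sub_apply, sub_mul]

lemma frobInner_self {n1 n2 : ℕ} (a : Fin n1 → Fin n2 → ℝ) :
    frobInner a a = frobSq a := by
  simp only [frobInner, frobSq, sq]

/-- First-order optimality: if moving from `x` along `-w` never decreases the norm,
then `x` and `w` have nonpositive inner product. -/
lemma frobInner_nonpos_of_forall_frobSq_le {n1 n2 : ℕ} {x w : Fin n1 → Fin n2 → ℝ}
    (h : ∀ t : ℝ, 0 < t → t ≤ 1 → frobSq x ≤ frobSq (x - t • w)) :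
    frobInner x w ≤ 0 := by
  by_contra! hpos
  have hw := frobSq_nonneg w
  have hden : 0 < frobInner x w + frobSq w := by linarith
  set t := frobInner x w / (frobInner x w + frobSq w)
  have ht0 : 0 < t := div_pos hpos hden
  have ht1 : t ≤ 1 := (div_le_one hden).2 (by linarith)
  have hmin := h t ht0 ht1
  rw [frobSq_sub_smul] at hmin
  have hmul : t * (frobInner x w + frobSq w) = frobInner x w := div_mul_cancel₀ _ hden.ne'
  nlinarith [mul_pos ht0 hpos, mul_pos ht0 (mul_pos ht0 hpos)]

lemma Isotonic.add_smul_sub {n1 n2 : ℕ} {u v : Fin n1 → Fin n2 → ℝ} (hu : Isotonic u)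
    (hv : Isotonic v) {t : ℝ} (ht0 : 0 ≤ t) (ht1 : t ≤ 1) : Isotonic (u + t • (v - u)) := by
  intro i k j l hik hjl
  have h₁ := mul_le_mul_of_nonneg_left (hu hik hjl) (sub_nonneg.2 ht1)
  have h₂ := mul_le_mul_of_nonneg_left (hv hik hjl) ht0
  simp only [Pi.add_apply, Pi.smul_apply, Pi.sub_apply, smul_eq_mul]
  linarith

lemma sub_mem_tangentCone {n1 n2 : ℕ} {θ u : Fin n1 → Fin n2 → ℝ} (hu : Isotonic u) :
    u - θ ∈ tangentCone θ :=
  subset_closure ⟨1, one_pos, u, hu, (one_smul ℝ _).symm⟩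

lemma smul_mem_tangentCone {n1 n2 : ℕ} {θ v : Fin n1 → Fin n2 → ℝ} {c : ℝ} (hc : 0 < c)
    (hv : v ∈ tangentCone θ) : c • v ∈ tangentCone θ := by
  refine map_mem_closure (continuous_const_smul c) hv ?_
  rintro _ ⟨α, hα, u, hu, rfl⟩
  exact ⟨c * α, mul_pos hc hα, u, hu, smul_smul c α _⟩

/-- **Deterministic projection inequality (proof of Lemma 3).** For every data matrix
`y`, every `θ*`, and every isotonic `θ`: if `θ̂` is the Euclidean projection of `y`
onto the isotonic cone `M` and `p` is the Euclidean projection of `ε = y − θ*` onto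
the tangent cone `T_M(θ)`, then `‖θ̂ − θ*‖² ≤ ‖θ* − θ‖² + ‖p‖²`. -/
theorem isotonic_projection_tangent_cone_inequality
    {n1 n2 : ℕ} (y θstar θ : Fin n1 → Fin n2 → ℝ) (hθ : Isotonic θ)
    (θhat : Fin n1 → Fin n2 → ℝ) (hθhat : Isotonic θhat)
    (hproj : ∀ u, Isotonic u → frobSq (y - θhat) ≤ frobSq (y - u))
    (p : Fin n1 → Fin n2 → ℝ) (hp : p ∈ tangentCone θ)
    (hpmin : ∀ u ∈ tangentCone θ, frobSq ((y - θstar) - p) ≤ frobSq ((y - θstar) - u)) :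
    frobSq (θhat - θstar) ≤ frobSq (θstar - θ) + frobSq p := by
  have hvar : frobInner (y - θhat) (θ - θhat) ≤ 0 := by
    refine frobInner_nonpos_of_forall_frobSq_le fun t ht0 ht1 => ?_
    rw [sub_sub]
    exact hproj _ (hθhat.add_smul_sub hθ ht0.le ht1)
  have hpp : frobInner ((y - θstar) - p) p ≤ 0 := by
    refine frobInner_nonpos_of_forall_frobSq_le fun t ht0 _ => ?_
    have hmin := hpmin _ (smul_mem_tangentCone (add_pos one_pos ht0) hp)
    rwa [add_smul, one_smul, ← sub_sub] at hmin
  rw [frobInner_sub_left, frobInner_self] at hpp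
  have hd := hpmin _ (sub_mem_tangentCone (θ := θ) hθhat)
  rw [frobSq_sub (y - θstar) p, frobSq_sub (y - θstar) (θhat - θ)] at hd
  have hpolar : frobSq (θhat - θstar) + frobSq (θhat - θ) - frobSq (θstar - θ)
      - 2 * frobInner (y - θstar) (θhat - θ) = 2 * frobInner (y - θhat) (θ - θhat) := by
    simp only [frobSq, frobInner, Finset.mul_sum, ← Finset.sum_sub_distrib,
      ← Finset.sum_add_distrib, Pi.sub_apply]
    exact Finset.sum_congr rfl fun _ _ => Finset.sum_congr rfl fun _ _ => by ring
  linarith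
end
end

section
/- Fix θ ∈ M and a rectangular partition π = (A_1,…,A_k) of {1,…,n1}×{1,…,n2} such that θ is constant on π. Then the tangent cone of M at θ satisfies the inclusion T_M(θ) ⊆ { v ∈ ℝ^{n1×n2} : for each i = 1,…,k, the restriction v(A_i) is isotonic on A_i }, where v(A_i) is isotonic on A_i means v_{ab} ≤ v_{cd} whenever (a,b), (c,d) ∈ A_i with a ≤ c and b ≤ d. -/
open MeasureTheory ProbabilityTheory

noncomputable section

/-- A rectangle `{(i,j) : k1 ≤ i ≤ l1, k2 ≤ j ≤ l2}` in `{1,…,n1} × {1,…,n2}`. -/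
def IsRect {n1 n2 : ℕ} (A : Set (Fin n1 × Fin n2)) : Prop :=
  ∃ (k1 l1 : Fin n1) (k2 l2 : Fin n2), k1 ≤ l1 ∧ k2 ≤ l2 ∧
    A = {p | k1 ≤ p.1 ∧ p.1 ≤ l1 ∧ k2 ≤ p.2 ∧ p.2 ≤ l2}

/-- A rectangular partition: pairwise disjoint rectangles covering the whole index set. -/
def IsRectPartition {n1 n2 : ℕ} (P : Finset (Set (Fin n1 × Fin n2))) : Prop :=
  (∀ A ∈ P, IsRect A) ∧
  (∀ A ∈ P, ∀ B ∈ P, A ≠ B → Disjoint A B) ∧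
  (∀ p : Fin n1 × Fin n2, ∃ A ∈ P, p ∈ A)

/-- `θ` is constant on each member of the partition `P`. -/
def ConstOnPartition {n1 n2 : ℕ} (θ : Fin n1 → Fin n2 → ℝ)
    (P : Finset (Set (Fin n1 × Fin n2))) : Prop :=
  ∀ A ∈ P, ∀ p ∈ A, ∀ q ∈ A, θ p.1 p.2 = θ q.1 q.2

/-- `k(θ)`: the smallest number of rectangles in a rectangular partition on which `θ`
is constant. -/
def kRect {n1 n2 : ℕ} (θ : Fin n1 → Fin n2 → ℝ) : ℕ :=
  sInf {k | ∃ P, IsRectPartition P ∧ ConstOnPartition θ P ∧ P.card = k}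

/-- `v` is isotonic on a subset `A` of indices. -/
def IsotonicOn {n1 n2 : ℕ} (v : Fin n1 → Fin n2 → ℝ) (A : Set (Fin n1 × Fin n2)) : Prop :=
  ∀ p ∈ A, ∀ q ∈ A, p.1 ≤ q.1 → p.2 ≤ q.2 → v p.1 p.2 ≤ v q.1 q.2

/-- Isotonicity on a fixed set of indices is a closed condition. -/
lemma isClosed_setOf_isotonicOn {n1 n2 : ℕ} (A : Set (Fin n1 × Fin n2)) :
    IsClosed {v : Fin n1 → Fin n2 → ℝ | IsotonicOn v A} := by
  simp only [IsotonicOn, Set.ofPred_forall]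
  repeat' refine isClosed_iInter fun _ => ?_
  exact isClosed_le (by fun_prop) (by fun_prop)

/-- A nonnegative multiple of `u - θ` is isotonic wherever `θ` is constant and `u` isotonic. -/
lemma Isotonic.isotonicOn_smul_sub {n1 n2 : ℕ} {u θ : Fin n1 → Fin n2 → ℝ}
    {A : Set (Fin n1 × Fin n2)} (hu : Isotonic u)
    (hA : ∀ p ∈ A, ∀ q ∈ A, θ p.1 p.2 = θ q.1 q.2) {α : ℝ} (hα : 0 ≤ α) :
    IsotonicOn (α • (u - θ)) A := by
  intro p hp q hq h1 h2
  simp only [Pi.smul_apply, Pi.sub_apply, smul_eq_mul, hA p hp q hq]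
  gcongr
  exact hu h1 h2

/-- **Lemma 4 (tangent cone inclusion).** If `θ` is isotonic and constant on a
rectangular partition `P` of the index set, then every element of the tangent cone
`T_M(θ)` is isotonic on each rectangle of `P`. -/
theorem tangent_cone_subset_piecewise_isotonic
    {n1 n2 : ℕ} (θ : Fin n1 → Fin n2 → ℝ) (hθ : Isotonic θ)
    (P : Finset (Set (Fin n1 × Fin n2))) (hP : IsRectPartition P)
    (hconst : ConstOnPartition θ P) :
    tangentCone θ ⊆ {v | ∀ A ∈ P, IsotonicOn v A} := by
  intro v hv A hA
  refine closure_minimal ?_ (isClosed_setOf_isotonicOn A) hv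
  rintro _ ⟨α, hα, u, hu, rfl⟩
  exact hu.isotonicOn_smul_sub (hconst A hA) hα.le
end
end

section
/- Fix θ* ∈ M with D := (θ*_{n1 n2} − θ*_{11})² > 0 and a real number c ≥ 1. Define the matrix θ by θ_{ij} = θ*_{11} + (sqrt(D)/c) · floor( c (θ*_{ij} − θ*_{11}) / sqrt(D) ). Then (i) θ ∈ M; (ii) θ*_{ij} − sqrt(D)/c ≤ θ_{ij} ≤ θ*_{ij} for all i, j, so that ||θ − θ*||² ≤ n·D/c²; and (iii) the number of distinct values c(θ) of the entries of θ is at most c + 1. -/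
open MeasureTheory ProbabilityTheory

noncomputable section

/-- `D(θ) = (θ_{n1 n2} − θ_{11})²`, the squared range of an isotonic matrix. -/
def Dmat {n1 n2 : ℕ} (h1 : 0 < n1) (h2 : 0 < n2) (θ : Fin n1 → Fin n2 → ℝ) : ℝ :=
  (θ ⟨n1 - 1, Nat.sub_lt h1 one_pos⟩ ⟨n2 - 1, Nat.sub_lt h2 one_pos⟩ - θ ⟨0, h1⟩ ⟨0, h2⟩) ^ 2

/-- **Discretization construction (Section 2.2).** Let `θ*` be isotonic with
`D = (θ*_{n1 n2} − θ*_{11})² > 0` and let `c ≥ 1`. Define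
`θ_{ij} = θ*_{11} + (sqrt D / c) ⌊c (θ*_{ij} − θ*_{11}) / sqrt D⌋`. Then (i) `θ` is
isotonic; (ii) `θ*_{ij} − sqrt D / c ≤ θ_{ij} ≤ θ*_{ij}` for all `i, j`, and hence
`‖θ − θ*‖² ≤ n D / c²`; (iii) `θ` takes at most `c + 1` distinct values. -/
theorem isotonic_discretization
    {n1 n2 : ℕ} (h1 : 0 < n1) (h2 : 0 < n2)
    (θstar : Fin n1 → Fin n2 → ℝ) (hθstar : Isotonic θstar)
    (D : ℝ) (hDdef : D = Dmat h1 h2 θstar) (hD : 0 < D)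
    (c : ℝ) (hc : 1 ≤ c)
    (θ : Fin n1 → Fin n2 → ℝ)
    (hθdef : ∀ i j, θ i j =
      θstar ⟨0, h1⟩ ⟨0, h2⟩ +
        Real.sqrt D / c *
          (⌊c * (θstar i j - θstar ⟨0, h1⟩ ⟨0, h2⟩) / Real.sqrt D⌋ : ℤ)) :
    Isotonic θ ∧
      (∀ i j, θstar i j - Real.sqrt D / c ≤ θ i j ∧ θ i j ≤ θstar i j) ∧
      frobSq (θ - θstar) ≤ (n1 * n2 : ℝ) * D / c ^ 2 ∧
      ((Finset.image (fun p : Fin n1 × Fin n2 => θ p.1 p.2) Finset.univ).card : ℝ) ≤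
        c + 1 := by
  have hs : 0 < Real.sqrt D := Real.sqrt_pos.mpr hD
  have hc0 : 0 < c := by linarith
  have hsc : 0 < Real.sqrt D / c := div_pos hs hc0
  have hrange : Real.sqrt D =
      θstar ⟨n1 - 1, Nat.sub_lt h1 one_pos⟩ ⟨n2 - 1, Nat.sub_lt h2 one_pos⟩
        - θstar ⟨0, h1⟩ ⟨0, h2⟩ := by
    rw [hDdef, Dmat, Real.sqrt_sq]
    exact sub_nonneg.mpr (hθstar (Fin.mk_le_mk.mpr (Nat.zero_le _))
      (Fin.mk_le_mk.mpr (Nat.zero_le _)))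
  have hbound : ∀ i j, θstar i j - Real.sqrt D / c ≤ θ i j ∧ θ i j ≤ θstar i j := by
    intro i j
    have hscale : θstar i j = θstar ⟨0, h1⟩ ⟨0, h2⟩ + Real.sqrt D / c *
        (c * (θstar i j - θstar ⟨0, h1⟩ ⟨0, h2⟩) / Real.sqrt D) := by
      field_simp
      ring
    have hle := mul_le_mul_of_nonneg_left
      (Int.floor_le (c * (θstar i j - θstar ⟨0, h1⟩ ⟨0, h2⟩) / Real.sqrt D)) hsc.le
    have hlt := mul_le_mul_of_nonneg_left
      (Int.lt_floor_add_one (c * (θstar i j - θstar ⟨0, h1⟩ ⟨0, h2⟩) / Real.sqrt D)).le hsc.le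
    have hdef := hθdef i j
    constructor <;> linarith
  refine ⟨?_, hbound, ?_, ?_⟩
  · intro i k j l hik hjl
    rw [hθdef, hθdef]
    have := hθstar hik hjl
    gcongr
  · have hentry : ∀ i j, (θ - θstar) i j ^ 2 ≤ D / c ^ 2 := by
      intro i j
      obtain ⟨hl, hu⟩ := hbound i j
      rw [← Real.sq_sqrt hD.le, ← div_pow, Pi.sub_apply, Pi.sub_apply]
      exact sq_le_sq' (by linarith) (by linarith)
    calc frobSq (θ - θstar) ≤ ∑ _i : Fin n1, ∑ _j : Fin n2, D / c ^ 2 :=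
          Finset.sum_le_sum fun i _ => Finset.sum_le_sum fun j _ => hentry i j
      _ = (n1 * n2 : ℝ) * D / c ^ 2 := by
          simp only [Finset.sum_const, Finset.card_univ, Fintype.card_fin, nsmul_eq_mul]
          ring
  · have hsub : Finset.image (fun p : Fin n1 × Fin n2 => θ p.1 p.2) Finset.univ ⊆
        (Finset.range (⌊c⌋₊ + 1)).image
          (fun m : ℕ => θstar ⟨0, h1⟩ ⟨0, h2⟩ + Real.sqrt D / c * (m : ℝ)) := by
      intro x hx
      obtain ⟨⟨i, j⟩, -, rfl⟩ := Finset.mem_image.mp hx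
      have hlow : θstar ⟨0, h1⟩ ⟨0, h2⟩ ≤ θstar i j :=
        hθstar (Fin.mk_le_mk.mpr (Nat.zero_le _)) (Fin.mk_le_mk.mpr (Nat.zero_le _))
      have hhigh : θstar i j ≤
          θstar ⟨n1 - 1, Nat.sub_lt h1 one_pos⟩ ⟨n2 - 1, Nat.sub_lt h2 one_pos⟩ :=
        hθstar (Fin.mk_le_mk.mpr (Nat.le_sub_one_of_lt i.isLt))
          (Fin.mk_le_mk.mpr (Nat.le_sub_one_of_lt j.isLt))
      have hnonneg : 0 ≤ c * (θstar i j - θstar ⟨0, h1⟩ ⟨0, h2⟩) / Real.sqrt D :=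
        div_nonneg (mul_nonneg hc0.le (sub_nonneg.mpr hlow)) hs.le
      have hle : c * (θstar i j - θstar ⟨0, h1⟩ ⟨0, h2⟩) / Real.sqrt D ≤ c := by
        rw [div_le_iff₀ hs]
        exact mul_le_mul_of_nonneg_left (by linarith) hc0.le
      refine Finset.mem_image.mpr
        ⟨⌊c * (θstar i j - θstar ⟨0, h1⟩ ⟨0, h2⟩) / Real.sqrt D⌋₊,
          Finset.mem_range.mpr (Nat.lt_succ_of_le (Nat.floor_le_floor hle)), ?_⟩
      rw [hθdef, natCast_floor_eq_intCast_floor hnonneg]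
    have hcard := (Finset.card_le_card hsub).trans Finset.card_image_le
    rw [Finset.card_range] at hcard
    calc _ ≤ ((⌊c⌋₊ + 1 : ℕ) : ℝ) := by exact_mod_cast hcard
      _ ≤ c + 1 := by
          push_cast
          linarith [Nat.floor_le hc0.le]
end
end

section
/- Let k be a positive integer and n1 = n2 = 2^k, n = n1·n2. Define θ* ∈ ℝ^{n1×n2} by θ*_{ij} = −(2^{−i} + 2^{−j}) and θ ∈ ℝ^{n1×n2} by θ_{ij} = −(2^{−min(i,k)} + 2^{−min(j,k)}). Then θ* ∈ M, θ ∈ M, k(θ) ≤ (k+1)², and (1/n)||θ − θ*||² ≤ max_{i,j} (θ_{ij} − θ*_{ij})² ≤ 4/n. -/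
open MeasureTheory ProbabilityTheory

noncomputable section

/-- A nonempty fibre of a monotone map on `Fin n` is an interval. -/
lemma Monotone.exists_fiber_iff_mem_Icc {n : ℕ} {α : Type*} [PartialOrder α]
    {f : Fin n → α} (hf : Monotone f) (i : Fin n) :
    ∃ a b : Fin n, a ≤ b ∧ ∀ x, f x = f i ↔ a ≤ x ∧ x ≤ b := by
  classical
  let s : Finset (Fin n) := Finset.univ.filter fun x => f x = f i
  have mem_s : ∀ x, x ∈ s ↔ f x = f i := fun x => by simp [s]
  have hs : s.Nonempty := ⟨i, (mem_s i).2 rfl⟩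
  refine ⟨s.min' hs, s.max' hs, s.min'_le_max' hs, fun x => ⟨fun hx => ?_, fun hx => ?_⟩⟩
  · exact ⟨s.min'_le x ((mem_s x).2 hx), s.le_max' x ((mem_s x).2 hx)⟩
  · apply le_antisymm
    · exact (hf hx.2).trans_eq ((mem_s _).1 (s.max'_mem hs))
    · exact ((mem_s _).1 (s.min'_mem hs)).symm.trans_le (hf hx.1)

/-- A matrix that factors through monotone maps of its row and column indices is constant on
a rectangular partition with at most as many members as the product of the codomains. -/
lemma kRect_le_card_mul_card {n1 n2 : ℕ} {α β : Type*} [PartialOrder α] [PartialOrder β]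
    [Fintype α] [Fintype β] {f : Fin n1 → α} {g : Fin n2 → β}
    (hf : Monotone f) (hg : Monotone g) {θ : Fin n1 → Fin n2 → ℝ}
    (hθ : ∀ i j i' j', f i = f i' → g j = g j' → θ i j = θ i' j') :
    kRect θ ≤ Fintype.card α * Fintype.card β := by
  classical
  let F : α × β → Set (Fin n1 × Fin n2) := fun c => {q | f q.1 = c.1 ∧ g q.2 = c.2}
  let P : Finset (Set (Fin n1 × Fin n2)) :=
    Finset.univ.image fun p : Fin n1 × Fin n2 => F (f p.1, g p.2)
  have hP : IsRectPartition P := by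
    refine ⟨?_, ?_, fun p => ⟨_, Finset.mem_image_of_mem _ (Finset.mem_univ p), rfl, rfl⟩⟩
    · intro A hA
      obtain ⟨p, -, rfl⟩ := Finset.mem_image.1 hA
      obtain ⟨a, b, hab, h⟩ := hf.exists_fiber_iff_mem_Icc p.1
      obtain ⟨c, d, hcd, h'⟩ := hg.exists_fiber_iff_mem_Icc p.2
      refine ⟨a, b, c, d, hab, hcd, ?_⟩
      ext q
      simp only [F, Set.mem_ofPred_eq, h, h', and_assoc]
    · intro A hA B hB hAB
      obtain ⟨p, -, rfl⟩ := Finset.mem_image.1 hA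
      obtain ⟨q, -, rfl⟩ := Finset.mem_image.1 hB
      refine Set.disjoint_left.2 fun r hr hr' => hAB ?_
      exact congrArg F (Prod.ext (hr.1.symm.trans hr'.1) (hr.2.symm.trans hr'.2))
  have hconst : ConstOnPartition θ P := by
    intro A hA q hq r hr
    obtain ⟨p, -, rfl⟩ := Finset.mem_image.1 hA
    exact hθ _ _ _ _ (hq.1.trans hr.1.symm) (hq.2.trans hr.2.symm)
  calc kRect θ ≤ P.card := Nat.sInf_le ⟨P, hP, hconst, rfl⟩
    _ ≤ (Finset.univ.image F).card := Finset.card_le_card fun A hA => by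
        obtain ⟨p, -, rfl⟩ := Finset.mem_image.1 hA
        exact Finset.mem_image_of_mem _ (Finset.mem_univ _)
    _ ≤ Fintype.card α * Fintype.card β := by
        simpa using Finset.card_image_le (s := Finset.univ) (f := F)

/-- The mean of squared entries is at most their supremum. -/
lemma frobSq_div_le_iSup {n1 n2 : ℕ} (θ : Fin n1 → Fin n2 → ℝ) :
    frobSq θ / ((n1 * n2 : ℕ) : ℝ) ≤ ⨆ p : Fin n1 × Fin n2, θ p.1 p.2 ^ 2 := by
  have hnonneg : 0 ≤ ⨆ p : Fin n1 × Fin n2, θ p.1 p.2 ^ 2 :=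
    Real.iSup_nonneg fun p => sq_nonneg _
  refine div_le_of_le_mul₀ (Nat.cast_nonneg _) hnonneg ?_
  rw [frobSq, ← Fintype.sum_prod_type' fun i j => θ i j ^ 2]
  refine (Finset.sum_le_card_nsmul _ _ _ fun p _ =>
    le_ciSup (f := fun p : Fin n1 × Fin n2 => θ p.1 p.2 ^ 2)
      (Set.finite_range _).bddAbove p).trans_eq ?_
  simp [mul_comm]

/-- Truncating the exponent of `2 ^ (-m)` at `k` changes its value by at most `2 ^ (-k)`. -/
lemma two_zpow_neg_min_sub_mem_Icc (m k : ℤ) :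
    (2 : ℝ) ^ (-min m k) - 2 ^ (-m) ∈ Set.Icc 0 ((2 : ℝ) ^ (-k)) := by
  rcases le_total m k with h | h
  · simp only [min_eq_left h, sub_self]
    exact ⟨le_rfl, by positivity⟩
  · rw [min_eq_right h]
    have h₁ : (2 : ℝ) ^ (-m) ≤ 2 ^ (-k) := zpow_le_zpow_right₀ one_le_two (neg_le_neg h)
    have h₂ : (0 : ℝ) < 2 ^ (-m) := by positivity
    exact ⟨by linarith, by linarith⟩

/-- **Remark 3 (example of near-parametric adaptation).** Let `n1 = n2 = 2^k` and
`n = n1 n2`. Define `θ*_{ij} = −(2^{−i} + 2^{−j})` and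
`θ_{ij} = −(2^{−min(i,k)} + 2^{−min(j,k)})` (`1`-based indices, so the `0`-based
index `i` below corresponds to `i+1`). Then `θ*` and `θ` are isotonic,
`k(θ) ≤ (k+1)²`, and `(1/n)‖θ − θ*‖² ≤ max_{i,j}(θ_{ij} − θ*_{ij})² ≤ 4/n`. -/
theorem isotonic_dyadic_example
    (k : ℕ) (hk : 0 < k)
    (θstar θ : Fin (2 ^ k) → Fin (2 ^ k) → ℝ)
    (hθstar : ∀ i j, θstar i j =
      -((2 : ℝ) ^ (-((i.1 : ℤ) + 1)) + (2 : ℝ) ^ (-((j.1 : ℤ) + 1))))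
    (hθ : ∀ i j, θ i j =
      -((2 : ℝ) ^ (-(min ((i.1 : ℤ) + 1) (k : ℤ))) +
        (2 : ℝ) ^ (-(min ((j.1 : ℤ) + 1) (k : ℤ))))) :
    Isotonic θstar ∧ Isotonic θ ∧ kRect θ ≤ (k + 1) ^ 2 ∧
      frobSq (θ - θstar) / ((2 ^ k * 2 ^ k : ℕ) : ℝ) ≤
        (⨆ p : Fin (2 ^ k) × Fin (2 ^ k), (θ p.1 p.2 - θstar p.1 p.2) ^ 2) ∧
      (⨆ p : Fin (2 ^ k) × Fin (2 ^ k), (θ p.1 p.2 - θstar p.1 p.2) ^ 2) ≤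
        4 / ((2 ^ k * 2 ^ k : ℕ) : ℝ) := by
  have hmono : ∀ {a b : ℤ}, a ≤ b → (2 : ℝ) ^ (-b) ≤ 2 ^ (-a) := fun h =>
    zpow_le_zpow_right₀ one_le_two (neg_le_neg h)
  refine ⟨?_, ?_, ?_, frobSq_div_le_iSup (θ - θstar), ?_⟩
  · intro i i' j j' hi hj
    rw [hθstar, hθstar]
    have hi : (i.1 : ℤ) ≤ i'.1 := by exact_mod_cast hi
    have hj : (j.1 : ℤ) ≤ j'.1 := by exact_mod_cast hj
    exact neg_le_neg (add_le_add (hmono (by gcongr)) (hmono (by gcongr)))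
  · intro i i' j j' hi hj
    rw [hθ, hθ]
    have hi : (i.1 : ℤ) ≤ i'.1 := by exact_mod_cast hi
    have hj : (j.1 : ℤ) ≤ j'.1 := by exact_mod_cast hj
    exact neg_le_neg (add_le_add (hmono (by gcongr)) (hmono (by gcongr)))
  · let f : Fin (2 ^ k) → Fin (k + 1) := fun i => ⟨min (i.1 + 1) k, by omega⟩
    have hf : Monotone f := fun i j hij =>
      Fin.mk_le_mk.2 (min_le_min_right k (Nat.add_le_add_right hij 1))
    have hcast : ∀ i : Fin (2 ^ k), min ((i.1 : ℤ) + 1) (k : ℤ) = ((f i).1 : ℤ) := fun i => by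
      simp [f]
    have hle := kRect_le_card_mul_card hf hf (θ := θ) fun i j i' j' hi hj => by
      rw [hθ, hθ, hcast, hcast, hcast, hcast, hi, hj]
    simpa [sq] using hle
  · refine Real.iSup_le (fun p => ?_) (by positivity)
    obtain ⟨h₁, h₂⟩ := two_zpow_neg_min_sub_mem_Icc ((p.1.1 : ℤ) + 1) k
    obtain ⟨h₃, h₄⟩ := two_zpow_neg_min_sub_mem_Icc ((p.2.1 : ℤ) + 1) k
    have hbound : 4 / ((2 ^ k * 2 ^ k : ℕ) : ℝ) = (2 * (2 : ℝ) ^ (-(k : ℤ))) ^ 2 := by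
      rw [zpow_neg, zpow_natCast]
      push_cast
      field_simp
      norm_num
    rw [hθ, hθstar, hbound]
    exact sq_le_sq' (by linarith) (by linarith)
end
end

section
/- There exists a universal constant C > 0 such that for all integers n1, n2 > 1 with n = n1·n2 and all σ > 0, the Gaussian width of the Frobenius-norm unit ball of isotonic matrices satisfies E[ sup over θ ∈ B(0,1) of ⟨ε, θ⟩ ] ≤ C·σ·( A·(log(B·sqrt(n)))² + 1 ), where A = (log n1)(log n2), B = 4·sqrt((log n1)(log n2)), ε has i.i.d. N(0,σ²) entries, and ⟨ε, θ⟩ = Σ_{i,j} ε_{ij} θ_{ij}. In particular, E[ sup over θ ∈ B(0,1) of ⟨ε, θ⟩ ] ≤ C·σ·(log n)⁴. -/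
open MeasureTheory ProbabilityTheory

noncomputable section

/-- The law of an `n1 × n2` matrix with i.i.d. `N(0, σ²)` entries. -/
def noiseMeasure (n1 n2 : ℕ) (σ : ℝ) : Measure (Fin n1 → Fin n2 → ℝ) :=
  Measure.pi fun _ => Measure.pi fun _ => gaussianReal 0 ⟨σ ^ 2, sq_nonneg σ⟩

/-- `lse` is the least squares estimator: for every data matrix `y`, `lse y` minimizes
the squared Frobenius distance to `y` over the cone of isotonic matrices. -/
def IsLSE {n1 n2 : ℕ} (lse : (Fin n1 → Fin n2 → ℝ) → Fin n1 → Fin n2 → ℝ) : Prop :=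
  ∀ y, Isotonic (lse y) ∧ ∀ θ, Isotonic θ → frobSq (y - lse y) ≤ frobSq (y - θ)

/-- The risk `R(θ*, est) = E ‖est(θ* + ε) − θ*‖² / n`, where `ε` has i.i.d. `N(0,σ²)`
entries and `n = n1 n2`. -/
def risk {n1 n2 : ℕ} (σ : ℝ) (θstar : Fin n1 → Fin n2 → ℝ)
    (est : (Fin n1 → Fin n2 → ℝ) → Fin n1 → Fin n2 → ℝ) : ℝ :=
  (∫ ε, frobSq (est (θstar + ε) - θstar) ∂noiseMeasure n1 n2 σ) / (n1 * n2)

/-- The trace inner product `⟨a, b⟩ = Σ_{i,j} a_{ij} b_{ij}`. -/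
def ip {n1 n2 : ℕ} (a b : Fin n1 → Fin n2 → ℝ) : ℝ := ∑ i, ∑ j, a i j * b i j

lemma sum_range_mul_eq_blocks (f : ℕ → ℝ) (p u : ℕ) :
    ∑ i ∈ Finset.range (p * u), f i =
      ∑ s ∈ Finset.range p, ∑ x ∈ Finset.range u, f (s * u + x) := by
  induction p with
  | zero => simp
  | succ p ih => rw [Nat.succ_mul, Finset.sum_range_add, ih, Finset.sum_range_succ]

lemma sum_range_mul_eq_cells (f : ℕ → ℕ → ℝ) (p q u v : ℕ) :
    ∑ i ∈ Finset.range (p * u), ∑ j ∈ Finset.range (q * v), f i j =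
      ∑ s ∈ Finset.range p, ∑ t ∈ Finset.range q,
        ∑ x ∈ Finset.range u, ∑ y ∈ Finset.range v, f (s * u + x) (t * v + y) := by
  rw [sum_range_mul_eq_blocks]
  refine Finset.sum_congr rfl fun s _ => ?_
  rw [Finset.sum_comm]
  rw [sum_range_mul_eq_blocks (fun j => ∑ x ∈ Finset.range u, f (s * u + x) j)]
  exact Finset.sum_congr rfl fun t _ => Finset.sum_comm

/-- Every rectangle sum of `e` is at most `M` times the square root of the area. -/
def RectBound (e : ℕ → ℕ → ℝ) (M : ℝ) : Prop :=
  ∀ i p j q : ℕ, |∑ x ∈ Finset.range p, ∑ y ∈ Finset.range q, e (i + x) (j + y)| ≤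
    M * √((p : ℝ) * q)

/-- The array of sums of `e` over the cells of a partition into `u × v` rectangles. -/
def coarsen (e : ℕ → ℕ → ℝ) (u v s t : ℕ) : ℝ :=
  ∑ x ∈ Finset.range u, ∑ y ∈ Finset.range v, e (s * u + x) (t * v + y)

/-- A doubly indexed array that is nonincreasing in both indices. -/
def AntitoneArray (g : ℕ → ℕ → ℝ) : Prop :=
  ∀ ⦃i k j l : ℕ⦄, i ≤ k → j ≤ l → g k l ≤ g i j

lemma RectBound.shift {e : ℕ → ℕ → ℝ} {M : ℝ} (he : RectBound e M) (a b : ℕ) :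
    RectBound (fun i j => e (a + i) (b + j)) M := fun i p j q => by
  simpa only [add_assoc] using he (a + i) p (b + j) q

lemma RectBound.transpose {e : ℕ → ℕ → ℝ} {M : ℝ} (he : RectBound e M) :
    RectBound (fun i j => e j i) M := fun i p j q => by
  rw [Finset.sum_comm, mul_comm (p : ℝ)]
  exact he j q i p

lemma RectBound.coarsen {e : ℕ → ℕ → ℝ} {M : ℝ} (he : RectBound e M) (u v : ℕ) :
    RectBound (coarsen e u v) (M * √((u : ℝ) * v)) := fun i p j q => by
  have h := he (i * u) (p * u) (j * v) (q * v)
  rw [sum_range_mul_eq_cells (fun x y => e (i * u + x) (j * v + y))] at h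
  have hs : √((u : ℝ) * v) * √((p : ℝ) * q) = √(((p * u : ℕ) : ℝ) * ((q * v : ℕ) : ℝ)) := by
    rw [← Real.sqrt_mul (by positivity)]
    congr 1
    push_cast
    ring
  rw [mul_assoc, hs]
  simpa only [_root_.coarsen, add_mul, add_assoc] using h

lemma sum_cell_oscillation_le {g : ℕ → ℕ → ℝ} {h : ℝ} (hg : AntitoneArray g)
    (h0 : ∀ i j, 0 ≤ g i j) (hh : g 0 0 ≤ h) (N u v : ℕ) :
    ∑ s ∈ Finset.range N, ∑ t ∈ Finset.range N,
      (g (s * u) (t * v) - g ((s + 1) * u) ((t + 1) * v)) ≤ 2 * N * h := by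
  have hle : ∀ i j, g i j ≤ h := fun i j => (hg (Nat.zero_le i) (Nat.zero_le j)).trans hh
  have split : ∑ s ∈ Finset.range N, ∑ t ∈ Finset.range N,
      (g (s * u) (t * v) - g ((s + 1) * u) ((t + 1) * v)) =
      ∑ t ∈ Finset.range N, (g (0 * u) (t * v) - g (N * u) (t * v)) +
      ∑ s ∈ Finset.range N, (g ((s + 1) * u) (0 * v) - g ((s + 1) * u) (N * v)) := by
    have h1 : ∀ t, g (0 * u) (t * v) - g (N * u) (t * v) =
        ∑ s ∈ Finset.range N, (g (s * u) (t * v) - g ((s + 1) * u) (t * v)) := fun t =>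
      (Finset.sum_range_sub' (fun s => g (s * u) (t * v)) N).symm
    have h2 : ∀ s, g ((s + 1) * u) (0 * v) - g ((s + 1) * u) (N * v) =
        ∑ t ∈ Finset.range N, (g ((s + 1) * u) (t * v) - g ((s + 1) * u) ((t + 1) * v)) :=
      fun s => (Finset.sum_range_sub' (fun t => g ((s + 1) * u) (t * v)) N).symm
    simp_rw [h1, h2]
    rw [Finset.sum_comm (f := fun t s => g (s * u) (t * v) - g ((s + 1) * u) (t * v)),
      ← Finset.sum_add_distrib]
    simp_rw [← Finset.sum_add_distrib, sub_add_sub_cancel]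
  rw [split]
  have b1 : ∑ t ∈ Finset.range N, (g (0 * u) (t * v) - g (N * u) (t * v)) ≤ N * h := by
    refine (Finset.sum_le_card_nsmul _ _ h fun t _ => ?_).trans (by simp)
    linarith [hle (0 * u) (t * v), h0 (N * u) (t * v)]
  have b2 : ∑ s ∈ Finset.range N, (g ((s + 1) * u) (0 * v) - g ((s + 1) * u) (N * v)) ≤ N * h := by
    refine (Finset.sum_le_card_nsmul _ _ h fun s _ => ?_).trans (by simp)
    linarith [hle ((s + 1) * u) (0 * v), h0 ((s + 1) * u) (N * v)]
  linarith

lemma abs_sum_sub_coarsen_le {e g : ℕ → ℕ → ℝ} {h B : ℝ} (hB : 0 ≤ B) (hg : AntitoneArray g)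
    (h0 : ∀ i j, 0 ≤ g i j) (hh : g 0 0 ≤ h) (N u v : ℕ)
    (hcell : ∀ s t, |∑ x ∈ Finset.range u, ∑ y ∈ Finset.range v,
      e (s * u + x) (t * v + y) * (g (s * u + x) (t * v + y) - g (s * u) (t * v))| ≤
        B * (g (s * u) (t * v) - g ((s + 1) * u) ((t + 1) * v))) :
    |∑ i ∈ Finset.range (N * u), ∑ j ∈ Finset.range (N * v), e i j * g i j -
      ∑ s ∈ Finset.range N, ∑ t ∈ Finset.range N, coarsen e u v s t * g (s * u) (t * v)| ≤
      B * (2 * N * h) := by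
  have key : ∑ i ∈ Finset.range (N * u), ∑ j ∈ Finset.range (N * v), e i j * g i j -
      ∑ s ∈ Finset.range N, ∑ t ∈ Finset.range N, coarsen e u v s t * g (s * u) (t * v) =
      ∑ s ∈ Finset.range N, ∑ t ∈ Finset.range N,
        ∑ x ∈ Finset.range u, ∑ y ∈ Finset.range v,
      e (s * u + x) (t * v + y) * (g (s * u + x) (t * v + y) - g (s * u) (t * v)) := by
    rw [sum_range_mul_eq_cells]
    simp_rw [coarsen, Finset.sum_mul, mul_sub, Finset.sum_sub_distrib]
  rw [key]
  calc _ ≤ ∑ s ∈ Finset.range N, ∑ t ∈ Finset.range N,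
        B * (g (s * u) (t * v) - g ((s + 1) * u) ((t + 1) * v)) :=
        (Finset.abs_sum_le_sum_abs _ _).trans <| Finset.sum_le_sum fun s _ =>
          (Finset.abs_sum_le_sum_abs _ _).trans <| Finset.sum_le_sum fun t _ => hcell s t
    _ ≤ B * (2 * N * h) := by
        simp_rw [← Finset.mul_sum]
        exact mul_le_mul_of_nonneg_left (sum_cell_oscillation_le hg h0 hh N u v) hB

lemma RectBound.nonneg {e : ℕ → ℕ → ℝ} {M : ℝ} (he : RectBound e M) : 0 ≤ M := by
  have := (abs_nonneg _).trans (he 0 1 0 1)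
  simpa using this

lemma RectBound.abs_apply_le {e : ℕ → ℕ → ℝ} {M : ℝ} (he : RectBound e M) (i j : ℕ) :
    |e i j| ≤ M := by
  simpa using he i 1 j 1

lemma RectBound.abs_sum_mul_square_le {M h : ℝ} (a : ℕ) {e g : ℕ → ℕ → ℝ} (he : RectBound e M)
    (hg : AntitoneArray g) (h0 : ∀ i j, 0 ≤ g i j) (hh : g 0 0 ≤ h) :
    |∑ i ∈ Finset.range (2 ^ a), ∑ j ∈ Finset.range (2 ^ a), e i j * g i j| ≤
      h * M * 2 ^ a * (1 + 4 * a) := by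
  induction a generalizing e g M with
  | zero =>
    have hM := he.nonneg
    simp only [pow_zero, Finset.range_one, Finset.sum_singleton, abs_mul, abs_of_nonneg (h0 0 0)]
    have := mul_le_mul (he.abs_apply_le 0 0) hh (h0 0 0) hM
    push_cast
    linarith
  | succ a ih =>
    have hM := he.nonneg
    have h2 : √(((2 : ℕ) : ℝ) * ((2 : ℕ) : ℝ)) = 2 := by
      rw [Real.sqrt_mul_self (by positivity)]; norm_num
    have hc := ih (he.coarsen 2 2) (g := fun s t => g (s * 2) (t * 2))
      (fun i k j l hik hjl => hg (by omega) (by omega)) (fun i j => h0 _ _) (by simpa using hh)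
    rw [h2] at hc
    have hcell : ∀ s t, |∑ x ∈ Finset.range 2, ∑ y ∈ Finset.range 2,
      e (s * 2 + x) (t * 2 + y) * (g (s * 2 + x) (t * 2 + y) - g (s * 2) (t * 2))| ≤
        (4 * M) * (g (s * 2) (t * 2) - g ((s + 1) * 2) ((t + 1) * 2)) := fun s t => by
      set D := g (s * 2) (t * 2) - g ((s + 1) * 2) ((t + 1) * 2)
      have hx : ∀ x ∈ Finset.range 2, ∀ y ∈ Finset.range 2,
          |e (s * 2 + x) (t * 2 + y) * (g (s * 2 + x) (t * 2 + y) - g (s * 2) (t * 2))| ≤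
            M * D := fun x hx y hy => by
        rw [Finset.mem_range] at hx hy
        have u1 : g (s * 2 + x) (t * 2 + y) ≤ g (s * 2) (t * 2) := hg (by omega) (by omega)
        have u2 : g ((s + 1) * 2) ((t + 1) * 2) ≤ g (s * 2 + x) (t * 2 + y) :=
          hg (by omega) (by omega)
        rw [abs_mul]
        refine mul_le_mul (he.abs_apply_le _ _) ?_ (abs_nonneg _) hM
        rw [abs_of_nonpos (by linarith)]
        simp only [D]
        linarith
      calc _ ≤ ∑ x ∈ Finset.range 2, ∑ y ∈ Finset.range 2, M * D :=
            (Finset.abs_sum_le_sum_abs _ _).trans <| Finset.sum_le_sum fun x hx' =>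
              (Finset.abs_sum_le_sum_abs _ _).trans <| Finset.sum_le_sum fun y hy' =>
                hx x hx' y hy'
        _ = (4 * M) * D := by
            simp only [Finset.sum_const, Finset.card_range, nsmul_eq_mul]
            push_cast
            ring
    have hd := abs_sum_sub_coarsen_le (by positivity) hg h0 hh (2 ^ a) 2 2 hcell
    rw [← pow_succ] at hd
    have := abs_le.1 hd
    have := abs_le.1 hc
    push_cast at *
    rw [abs_le]
    rw [pow_succ]
    constructor <;> nlinarith

lemma sum_mul_sub_eq_abel (c G : ℕ → ℝ) (v : ℕ) :
    ∑ y ∈ Finset.range v, c y * (G y - G 0) =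
      (∑ x ∈ Finset.range v, c x) * (G v - G 0) +
        ∑ y ∈ Finset.range v, (∑ x ∈ Finset.range (y + 1), c x) * (G y - G (y + 1)) := by
  induction v with
  | zero => simp
  | succ v ih =>
    rw [Finset.sum_range_succ, ih, Finset.sum_range_succ _ v]
    rw [Finset.sum_range_succ (fun y => (∑ x ∈ Finset.range (y + 1), c x) * (G y - G (y + 1))) v,
      Finset.sum_range_succ _ v]
    ring

lemma abs_sum_mul_sub_le {c G : ℕ → ℝ} {K : ℝ} {v : ℕ} (hG : Antitone G)
    (hc : ∀ y ≤ v, |∑ x ∈ Finset.range y, c x| ≤ K) :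
    |∑ y ∈ Finset.range v, c y * (G y - G 0)| ≤ 2 * K * (G 0 - G v) := by
  rw [sum_mul_sub_eq_abel]
  have h1 : |(∑ x ∈ Finset.range v, c x) * (G v - G 0)| ≤ K * (G 0 - G v) := by
    rw [abs_mul, abs_of_nonpos (sub_nonpos.2 (hG (Nat.zero_le v))), neg_sub]
    exact mul_le_mul_of_nonneg_right (hc v le_rfl) (sub_nonneg.2 (hG (Nat.zero_le v)))
  have h2 : |∑ y ∈ Finset.range v, (∑ x ∈ Finset.range (y + 1), c x) * (G y - G (y + 1))| ≤
      K * (G 0 - G v) := by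
    rw [← Finset.sum_range_sub' G v, Finset.mul_sum]
    refine (Finset.abs_sum_le_sum_abs _ _).trans <| Finset.sum_le_sum fun y hy => ?_
    have hd : 0 ≤ G y - G (y + 1) := sub_nonneg.2 (hG (Nat.le_succ y))
    rw [abs_mul, abs_of_nonneg hd]
    exact mul_le_mul_of_nonneg_right (hc (y + 1) (Finset.mem_range.1 hy)) hd
  exact (abs_add_le _ _).trans (by linarith)

lemma RectBound.abs_sum_mul_wide_le {M h : ℝ} (a v : ℕ) {e g : ℕ → ℕ → ℝ} (he : RectBound e M)
    (hg : AntitoneArray g) (h0 : ∀ i j, 0 ≤ g i j) (hh : g 0 0 ≤ h) :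
    |∑ i ∈ Finset.range (2 ^ a), ∑ j ∈ Finset.range (2 ^ a * v), e i j * g i j| ≤
      h * M * (2 ^ a * √v) * (5 + 4 * a) := by
  have hM := he.nonneg
  have hc := (he.coarsen 1 v).abs_sum_mul_square_le a (g := fun s t => g (s * 1) (t * v))
      (fun i k j l hik hjl => hg (by omega) (Nat.mul_le_mul_right v hjl))
      (fun i j => h0 _ _) (by simpa using hh)
  have hcell : ∀ s t, |∑ x ∈ Finset.range 1, ∑ y ∈ Finset.range v,
      e (s * 1 + x) (t * v + y) * (g (s * 1 + x) (t * v + y) - g (s * 1) (t * v))| ≤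
        (2 * (M * √v)) * (g (s * 1) (t * v) - g ((s + 1) * 1) ((t + 1) * v)) := fun s t => by
    have := abs_sum_mul_sub_le (c := fun y => e s (t * v + y)) (G := fun y => g s (t * v + y))
      (K := M * √v) (v := v) (fun y z hyz => hg le_rfl (by omega)) fun y hy => by
        have h1 := he s 1 (t * v) y
        simp only [Finset.range_one, Finset.sum_singleton, add_zero, Nat.cast_one, one_mul] at h1
        refine h1.trans (mul_le_mul_of_nonneg_left (Real.sqrt_le_sqrt ?_) hM)
        exact_mod_cast hy
    simp only [Finset.range_one, Finset.sum_singleton, mul_one, add_zero] at this ⊢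
    refine this.trans (mul_le_mul_of_nonneg_left ?_ (by positivity))
    have : g (s + 1) ((t + 1) * v) ≤ g s (t * v + v) := hg (by omega) (by rw [add_mul, one_mul])
    linarith
  have hd := abs_sum_sub_coarsen_le (by positivity) hg h0 hh (2 ^ a) 1 v hcell
  rw [mul_one] at hd
  push_cast at hd hc
  rw [one_mul] at hc
  have := abs_le.1 hd
  have := abs_le.1 hc
  rw [abs_le]
  constructor <;> nlinarith

lemma RectBound.abs_sum_mul_dyadic_le {M h : ℝ} (a b : ℕ) {e g : ℕ → ℕ → ℝ}
    (he : RectBound e M) (hg : AntitoneArray g) (h0 : ∀ i j, 0 ≤ g i j) (hh : g 0 0 ≤ h) :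
    |∑ i ∈ Finset.range (2 ^ a), ∑ j ∈ Finset.range (2 ^ b), e i j * g i j| ≤
      h * M * √(2 ^ a * 2 ^ b) * (5 + 4 * a) := by
  have hroot : ∀ m k : ℕ, √((2 : ℝ) ^ m * 2 ^ (m + k)) = 2 ^ m * √((2 ^ k : ℕ) : ℝ) := by
    intro m k
    rw [pow_add, ← mul_assoc, Real.sqrt_mul (by positivity), Real.sqrt_mul_self (by positivity)]
    push_cast
    rfl
  have hM := he.nonneg
  have hh0 : 0 ≤ h := (h0 0 0).trans hh
  rcases le_total a b with hab | hab
  · obtain ⟨k, rfl⟩ := Nat.exists_eq_add_of_le hab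
    rw [hroot, pow_add]
    exact he.abs_sum_mul_wide_le a (2 ^ k) hg h0 hh
  · obtain ⟨k, rfl⟩ := Nat.exists_eq_add_of_le hab
    rw [mul_comm ((2 : ℝ) ^ (b + k)), hroot, pow_add, Finset.sum_comm]
    refine (he.transpose.abs_sum_mul_wide_le b (2 ^ k) (g := fun i j => g j i)
      (fun i k j l hik hjl => hg hjl hik) (fun i j => h0 j i) hh).trans ?_
    refine mul_le_mul_of_nonneg_left ?_ (by positivity)
    push_cast
    linarith [(Nat.cast_nonneg k : (0 : ℝ) ≤ k)]

lemma sum_range_two_pow_sub_one (f : ℕ → ℝ) (K : ℕ) :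
    ∑ i ∈ Finset.range (2 ^ K - 1), f i =
      ∑ a ∈ Finset.range K, ∑ x ∈ Finset.range (2 ^ a), f (2 ^ a - 1 + x) := by
  induction K with
  | zero => simp
  | succ K ih =>
    have : 2 ^ (K + 1) - 1 = (2 ^ K - 1) + 2 ^ K := by
      have := Nat.one_le_two_pow (n := K)
      rw [pow_succ]
      omega
    rw [this, Finset.sum_range_add, ih, Finset.sum_range_succ]

/-- An antitone array with `g i j ^ 2 * ((i + 1) * (j + 1)) ≤ 1` is controlled on each block of
the dyadic partition of the quadrant. -/
lemma RectBound.abs_sum_mul_le {M : ℝ} (K₁ K₂ : ℕ) {e g : ℕ → ℕ → ℝ}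
    (he : RectBound e M) (hg : AntitoneArray g) (h0 : ∀ i j, 0 ≤ g i j)
    (hdecay : ∀ i j : ℕ, g i j ^ 2 * (((i : ℝ) + 1) * (j + 1)) ≤ 1) :
    |∑ i ∈ Finset.range (2 ^ K₁ - 1), ∑ j ∈ Finset.range (2 ^ K₂ - 1), e i j * g i j| ≤
      M * (K₁ * K₂ * (5 + 4 * K₁)) := by
  have hM := he.nonneg
  have hblock : ∀ a ∈ Finset.range K₁, ∀ b ∈ Finset.range K₂,
      |∑ x ∈ Finset.range (2 ^ a), ∑ y ∈ Finset.range (2 ^ b),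
        e (2 ^ a - 1 + x) (2 ^ b - 1 + y) * g (2 ^ a - 1 + x) (2 ^ b - 1 + y)| ≤
        M * (5 + 4 * K₁) := fun a ha b _ => by
    have hb := (he.shift (2 ^ a - 1) (2 ^ b - 1)).abs_sum_mul_dyadic_le a b
      (g := fun i j => g (2 ^ a - 1 + i) (2 ^ b - 1 + j))
      (fun i k j l hik hjl => hg (by omega) (by omega)) (fun i j => h0 _ _) le_rfl
    refine hb.trans ?_
    simp only [add_zero]
    have hd := hdecay (2 ^ a - 1) (2 ^ b - 1)
    rw [Nat.cast_sub Nat.one_le_two_pow, Nat.cast_sub Nat.one_le_two_pow] at hd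
    push_cast at hd
    simp only [sub_add_cancel] at hd
    have hprod : g (2 ^ a - 1) (2 ^ b - 1) * √((2 : ℝ) ^ a * 2 ^ b) ≤ 1 := by
      rw [← abs_of_nonneg (mul_nonneg (h0 (2 ^ a - 1) (2 ^ b - 1))
        (Real.sqrt_nonneg ((2 : ℝ) ^ a * 2 ^ b))), ← sq_le_one_iff_abs_le_one, mul_pow,
        Real.sq_sqrt (by positivity)]
      exact hd
    have haK : (a : ℝ) ≤ K₁ := by exact_mod_cast (Finset.mem_range.1 ha).le
    calc _ = M * (g (2 ^ a - 1) (2 ^ b - 1) * √((2 : ℝ) ^ a * 2 ^ b)) * (5 + 4 * a) := by ring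
      _ ≤ M * 1 * (5 + 4 * K₁) := by gcongr
      _ = _ := by ring
  rw [sum_range_two_pow_sub_one]
  calc _ = |∑ a ∈ Finset.range K₁, ∑ b ∈ Finset.range K₂,
        ∑ x ∈ Finset.range (2 ^ a), ∑ y ∈ Finset.range (2 ^ b),
        e (2 ^ a - 1 + x) (2 ^ b - 1 + y) * g (2 ^ a - 1 + x) (2 ^ b - 1 + y)| := by
        congr 1
        refine Finset.sum_congr rfl fun a _ => ?_
        exact (Finset.sum_congr rfl fun x _ => sum_range_two_pow_sub_one
          (fun j => e (2 ^ a - 1 + x) j * g (2 ^ a - 1 + x) j) K₂).trans Finset.sum_comm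
    _ ≤ ∑ a ∈ Finset.range K₁, ∑ b ∈ Finset.range K₂, M * (5 + 4 * K₁) :=
        (Finset.abs_sum_le_sum_abs _ _).trans <| Finset.sum_le_sum fun a ha =>
          (Finset.abs_sum_le_sum_abs _ _).trans <| Finset.sum_le_sum fun b hb =>
            hblock a ha b hb
    _ = _ := by
        simp only [Finset.sum_const, Finset.card_range, nsmul_eq_mul]
        ring

/-- The indices of `Fin n` lying in `[i₀, i₁)`. -/
def finIco (n i₀ i₁ : ℕ) : Finset (Fin n) :=
  Finset.univ.filter fun i => i₀ ≤ (i : ℕ) ∧ (i : ℕ) < i₁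

/-- Every rectangle sum of the matrix `ε` is at most `M` times the square root of the area. -/
def GridRectBound {n1 n2 : ℕ} (ε : Fin n1 → Fin n2 → ℝ) (M : ℝ) : Prop :=
  ∀ i₀ i₁ j₀ j₁ : ℕ, |∑ i ∈ finIco n1 i₀ i₁, ∑ j ∈ finIco n2 j₀ j₁, ε i j| ≤
    M * √(((finIco n1 i₀ i₁).card : ℝ) * (finIco n2 j₀ j₁).card)

/-- The extension of a matrix by zero to a doubly indexed array. -/
def zeroExtend {n1 n2 : ℕ} (f : Fin n1 → Fin n2 → ℝ) (i j : ℕ) : ℝ :=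
  if h : i < n1 ∧ j < n2 then f ⟨i, h.1⟩ ⟨j, h.2⟩ else 0

lemma zeroExtend_coe {n1 n2 : ℕ} (f : Fin n1 → Fin n2 → ℝ) (i : Fin n1) (j : Fin n2) :
    zeroExtend f i j = f i j := by
  simp [zeroExtend]

lemma card_finIco_le (n i₀ i₁ : ℕ) : (finIco n i₀ i₁).card ≤ i₁ - i₀ := by
  rw [← Nat.card_Ico]
  refine Finset.card_le_card_of_injOn Fin.val (fun i hi => ?_) Fin.val_injective.injOn
  simpa [finIco] using hi

lemma finIco_min (n i₀ i₁ : ℕ) : finIco n (min i₀ n) (min i₁ n) = finIco n i₀ i₁ := by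
  ext i
  have := i.isLt
  simp only [finIco, Finset.mem_filter, Finset.mem_univ, true_and]
  omega

lemma sum_range_add_eq_sum_finIco {n : ℕ} {F : ℕ → ℝ} (hF : ∀ i, n ≤ i → F i = 0) (i₀ p : ℕ) :
    ∑ x ∈ Finset.range p, F (i₀ + x) = ∑ i ∈ finIco n i₀ (i₀ + p), F i := by
  have h1 : ∑ x ∈ Finset.range p, F (i₀ + x) = ∑ i ∈ Finset.Ico i₀ (i₀ + p), F i := by
    rw [Finset.sum_Ico_eq_sum_range, Nat.add_sub_cancel_left]
  have h2 : ∑ i ∈ finIco n i₀ (i₀ + p), F i =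
      ∑ i ∈ Finset.range n, if i₀ ≤ i ∧ i < i₀ + p then F i else 0 := by
    rw [finIco, Finset.sum_filter,
      ← Fin.sum_univ_eq_sum_range (fun i => if i₀ ≤ i ∧ i < i₀ + p then F i else 0)]
  rw [h1, h2, ← Finset.sum_filter]
  refine (Finset.sum_subset (fun i hi => ?_) fun i hi hni => hF i ?_).symm
  · simp only [Finset.mem_filter, Finset.mem_Ico] at hi ⊢
    exact hi.2
  · simp only [Finset.mem_filter, Finset.mem_range, Finset.mem_Ico] at hi hni
    by_contra hlt
    exact hni ⟨not_le.1 hlt, hi⟩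

lemma GridRectBound.nonneg_of_pos {n1 n2 : ℕ} {ε : Fin n1 → Fin n2 → ℝ} {M : ℝ}
    (hε : GridRectBound ε M) (h1 : 0 < n1) (h2 : 0 < n2) : 0 ≤ M := by
  have h := (abs_nonneg _).trans (hε 0 n1 0 n2)
  have hall : ∀ n, finIco n 0 n = Finset.univ := fun n => by
    ext i
    simp [finIco]
  rw [hall, hall, Finset.card_univ, Finset.card_univ, Fintype.card_fin, Fintype.card_fin] at h
  exact nonneg_of_mul_nonneg_left h (Real.sqrt_pos.2 (by positivity))

lemma GridRectBound.rectBound_zeroExtend {n1 n2 : ℕ} {ε : Fin n1 → Fin n2 → ℝ} {M : ℝ}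
    (hε : GridRectBound ε M) (h1 : 0 < n1) (h2 : 0 < n2) : RectBound (zeroExtend ε) M := by
  intro i p j q
  have hM := hε.nonneg_of_pos h1 h2
  have hout1 : ∀ k l, n1 ≤ k → zeroExtend ε k l = 0 := fun k l hk =>
    dif_neg fun h => absurd h.1 (not_lt.2 hk)
  have hout2 : ∀ k l, n2 ≤ l → zeroExtend ε k l = 0 := fun k l hl =>
    dif_neg fun h => absurd h.2 (not_lt.2 hl)
  have hsum : ∑ x ∈ Finset.range p, ∑ y ∈ Finset.range q, zeroExtend ε (i + x) (j + y) =
      ∑ k ∈ finIco n1 i (i + p), ∑ l ∈ finIco n2 j (j + q), ε k l := by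
    rw [sum_range_add_eq_sum_finIco (n := n1)
      (F := fun k => ∑ y ∈ Finset.range q, zeroExtend ε k (j + y))
      fun k hk => Finset.sum_eq_zero fun y _ => hout1 _ _ hk]
    refine Finset.sum_congr rfl fun k _ => ?_
    rw [sum_range_add_eq_sum_finIco (n := n2) (F := fun l => zeroExtend ε k l)
      fun l hl => hout2 _ _ hl]
    exact Finset.sum_congr rfl fun l _ => zeroExtend_coe ε k l
  rw [hsum]
  refine (hε _ _ _ _).trans (mul_le_mul_of_nonneg_left (Real.sqrt_le_sqrt ?_) hM)
  have c1 := card_finIco_le n1 i (i + p)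
  have c2 := card_finIco_le n2 j (j + q)
  rw [Nat.add_sub_cancel_left] at c1 c2
  exact_mod_cast Nat.mul_le_mul c1 c2

lemma sum_finIco_rev {n : ℕ} (F : Fin n → ℝ) (i₀ i₁ : ℕ) :
    ∑ i ∈ finIco n i₀ i₁, F i.rev = ∑ i ∈ finIco n (n - i₁) (n - i₀), F i := by
  refine Finset.sum_nbij' Fin.rev Fin.rev (fun i hi => ?_) (fun i hi => ?_) (by simp) (by simp)
    (by simp)
  all_goals
    have := i.isLt
    simp only [finIco, Finset.mem_filter, Finset.mem_univ, true_and, Fin.val_rev] at hi ⊢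
    omega

lemma GridRectBound.rev {n1 n2 : ℕ} {ε : Fin n1 → Fin n2 → ℝ} {M : ℝ}
    (hε : GridRectBound ε M) : GridRectBound (fun i j => ε i.rev j.rev) M := by
  have hcard : ∀ n i₀ i₁, (finIco n i₀ i₁).card = (finIco n (n - i₁) (n - i₀)).card := by
    intro n i₀ i₁
    have := sum_finIco_rev (n := n) (fun _ => 1) i₀ i₁
    simp only [Finset.sum_const, nsmul_eq_mul, mul_one] at this
    exact_mod_cast this
  intro i₀ i₁ j₀ j₁
  simp_rw [fun i : Fin n1 => sum_finIco_rev (fun j => ε i.rev j) j₀ j₁]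
  rw [sum_finIco_rev (fun i => ∑ j ∈ finIco n2 (n2 - j₁) (n2 - j₀), ε i j), hcard n1, hcard n2]
  exact hε _ _ _ _

lemma GridRectBound.abs_ip_le_of_antitone {n1 n2 : ℕ} {ε g : Fin n1 → Fin n2 → ℝ} {M : ℝ}
    (hε : GridRectBound ε M) (h1 : 0 < n1) (h2 : 0 < n2) {K₁ K₂ : ℕ}
    (hK₁ : n1 < 2 ^ K₁) (hK₂ : n2 < 2 ^ K₂) (hg0 : ∀ i j, 0 ≤ g i j)
    (hg : ∀ ⦃i k j l⦄, i ≤ k → j ≤ l → g k l ≤ g i j) (hfrob : frobSq g ≤ 1) :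
    |ip ε g| ≤ M * (K₁ * K₂ * (5 + 4 * K₁)) := by
  have hnonneg : ∀ i j, 0 ≤ zeroExtend g i j := fun i j => by
    unfold zeroExtend
    split
    exacts [hg0 _ _, le_rfl]
  have hanti : AntitoneArray (zeroExtend g) := fun i k j l hik hjl => by
    by_cases h : k < n1 ∧ l < n2
    · rw [zeroExtend, zeroExtend, dif_pos h, dif_pos ⟨hik.trans_lt h.1, hjl.trans_lt h.2⟩]
      exact hg hik hjl
    · rw [zeroExtend, dif_neg h]
      exact hnonneg i j
  have hdecay : ∀ i j : ℕ, zeroExtend g i j ^ 2 * (((i : ℝ) + 1) * (j + 1)) ≤ 1 := fun i j => by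
    by_cases h : i < n1 ∧ j < n2
    · rw [zeroExtend, dif_pos h]
      refine le_trans ?_ hfrob
      set a : Fin n1 := ⟨i, h.1⟩
      set b : Fin n2 := ⟨j, h.2⟩
      have hcst : g a b ^ 2 * (((i : ℝ) + 1) * (j + 1)) =
          ∑ _k ∈ Finset.Iic a, ∑ _l ∈ Finset.Iic b, g a b ^ 2 := by
        simp only [Finset.sum_const, Fin.card_Iic, nsmul_eq_mul, a, b]
        push_cast
        ring
      rw [hcst, frobSq]
      calc _ ≤ ∑ k ∈ Finset.Iic a, ∑ l ∈ Finset.Iic b, g k l ^ 2 :=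
            Finset.sum_le_sum fun k hk => Finset.sum_le_sum fun l hl =>
              pow_le_pow_left₀ (hg0 _ _) (hg (Finset.mem_Iic.1 hk) (Finset.mem_Iic.1 hl)) 2
        _ ≤ ∑ k ∈ Finset.Iic a, ∑ l, g k l ^ 2 :=
            Finset.sum_le_sum fun k _ => Finset.sum_le_sum_of_subset_of_nonneg
              (Finset.subset_univ _) fun l _ _ => sq_nonneg _
        _ ≤ _ := Finset.sum_le_sum_of_subset_of_nonneg (Finset.subset_univ _) fun k _ _ =>
            Finset.sum_nonneg fun l _ => sq_nonneg _
    · rw [zeroExtend, dif_neg h]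
      simp
  have hmain := (hε.rectBound_zeroExtend h1 h2).abs_sum_mul_le K₁ K₂ hanti hnonneg hdecay
  have hzero : ∀ k l, ¬ (k < n1 ∧ l < n2) → zeroExtend ε k l * zeroExtend g k l = 0 :=
    fun k l h => by rw [zeroExtend, dif_neg h, zero_mul]
  have hsum : ip ε g = ∑ i ∈ Finset.range (2 ^ K₁ - 1), ∑ j ∈ Finset.range (2 ^ K₂ - 1),
      zeroExtend ε i j * zeroExtend g i j := by
    have hrange : ∀ {n K : ℕ} (F : ℕ → ℝ), n < 2 ^ K → (∀ i, n ≤ i → F i = 0) →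
        ∑ i ∈ Finset.range (2 ^ K - 1), F i = ∑ i : Fin n, F i := fun {n K} F hK hF => by
      rw [Fin.sum_univ_eq_sum_range]
      refine (Finset.sum_subset (Finset.range_mono (by omega)) fun i _ hi => hF i ?_).symm
      simpa using hi
    rw [hrange _ hK₁ fun i hi => Finset.sum_eq_zero fun j _ => hzero _ _ (by omega), ip]
    refine Finset.sum_congr rfl fun i _ => ?_
    rw [hrange _ hK₂ fun j hj => hzero _ _ (by omega)]
    exact Finset.sum_congr rfl fun j _ => by rw [zeroExtend_coe, zeroExtend_coe]
  rwa [hsum]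

lemma GridRectBound.ip_le_of_isotonic {n1 n2 : ℕ} {ε θ : Fin n1 → Fin n2 → ℝ} {M : ℝ}
    (hε : GridRectBound ε M) (h1 : 0 < n1) (h2 : 0 < n2) {K₁ K₂ : ℕ}
    (hK₁ : n1 < 2 ^ K₁) (hK₂ : n2 < 2 ^ K₂) (hθ : Isotonic θ) (hfrob : frobSq θ ≤ 1) :
    ip ε θ ≤ 2 * (M * (K₁ * K₂ * (5 + 4 * K₁))) := by
  have hrev : ∀ f : Fin n1 → Fin n2 → ℝ, ∑ i, ∑ j, f (Fin.rev i) (Fin.rev j) = ∑ i, ∑ j, f i j :=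
      fun f => by
    rw [← Equiv.sum_comp Fin.revPerm fun i => ∑ j, f i j]
    exact Finset.sum_congr rfl fun i _ => Equiv.sum_comp Fin.revPerm fun j => f i.rev j
  have hpos := hε.rev.abs_ip_le_of_antitone h1 h2 hK₁ hK₂
    (g := fun i j => max (θ i.rev j.rev) 0) (fun i j => le_max_right _ _)
    (fun i k j l hik hjl =>
      max_le_max_right _ (hθ (Fin.rev_le_rev.2 hik) (Fin.rev_le_rev.2 hjl)))
    (by
      refine le_trans ?_ hfrob
      rw [frobSq, hrev fun i j => max (θ i j) 0 ^ 2]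
      refine Finset.sum_le_sum fun i _ => Finset.sum_le_sum fun j _ => ?_
      rcases le_total (θ i j) 0 with h | h
      · rw [max_eq_right h, zero_pow two_ne_zero]; exact sq_nonneg _
      · rw [max_eq_left h])
  have hneg := hε.abs_ip_le_of_antitone h1 h2 hK₁ hK₂
    (g := fun i j => max (-θ i j) 0) (fun i j => le_max_right _ _)
    (fun i k j l hik hjl => max_le_max_right _ (neg_le_neg (hθ hik hjl)))
    (by
      refine le_trans ?_ hfrob
      refine Finset.sum_le_sum fun i _ => Finset.sum_le_sum fun j _ => ?_
      beta_reduce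
      rcases le_total (-θ i j) 0 with h | h
      · rw [max_eq_right h, zero_pow two_ne_zero]; exact sq_nonneg _
      · rw [max_eq_left h, neg_sq])
  have hsplit : ip ε θ = ip (fun i j => ε i.rev j.rev) (fun i j => max (θ i.rev j.rev) 0) -
      ip ε (fun i j => max (-θ i j) 0) := by
    simp only [ip]
    rw [hrev fun i j => ε i j * max (θ i j) 0, ← Finset.sum_sub_distrib]
    refine Finset.sum_congr rfl fun i _ => ?_
    rw [← Finset.sum_sub_distrib]
    refine Finset.sum_congr rfl fun j _ => ?_
    rcases le_total (θ i j) 0 with h | h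
    · rw [max_eq_right h, max_eq_left (by linarith)]; ring
    · rw [max_eq_left h, max_eq_right (by linarith)]; ring
  rw [hsplit]
  linarith [(abs_le.1 hpos).2, (abs_le.1 hneg).1]

lemma noiseMeasure_eq (n1 n2 : ℕ) (σ : ℝ) :
    noiseMeasure n1 n2 σ =
      Measure.pi fun _ => Measure.pi fun _ => gaussianReal 0 (Real.toNNReal (σ ^ 2)) := by
  have h : Real.toNNReal (σ ^ 2) = ⟨σ ^ 2, sq_nonneg σ⟩ :=
    Real.toNNReal_of_nonneg (sq_nonneg σ)
  rw [h]
  rfl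

instance (n1 n2 : ℕ) (σ : ℝ) : IsProbabilityMeasure (noiseMeasure n1 n2 σ) := by
  rw [noiseMeasure_eq]
  infer_instance

lemma exp_ip_eq_prod {n1 n2 : ℕ} (ε c : Fin n1 → Fin n2 → ℝ) :
    Real.exp (ip ε c) = ∏ i, ∏ j, Real.exp (c i j * ε i j) := by
  simp_rw [ip, Real.exp_sum, mul_comm]

lemma integrable_exp_ip {n1 n2 : ℕ} (σ : ℝ) (c : Fin n1 → Fin n2 → ℝ) :
    Integrable (fun ε => Real.exp (ip ε c)) (noiseMeasure n1 n2 σ) := by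
  simp_rw [noiseMeasure_eq, exp_ip_eq_prod]
  exact Integrable.fintype_prod (f := fun i (r : Fin n2 → ℝ) => ∏ j, Real.exp (c i j * r j))
    fun i => Integrable.fintype_prod (f := fun j x => Real.exp (c i j * x)) fun j =>
      integrable_exp_mul_gaussianReal _

lemma integral_exp_ip {n1 n2 : ℕ} (σ : ℝ) (c : Fin n1 → Fin n2 → ℝ) :
    ∫ ε, Real.exp (ip ε c) ∂noiseMeasure n1 n2 σ = Real.exp (σ ^ 2 * frobSq c / 2) := by
  simp_rw [exp_ip_eq_prod]
  rw [noiseMeasure_eq, integral_fintype_prod_eq_prod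
    (f := fun i (r : Fin n2 → ℝ) => ∏ j, Real.exp (c i j * r j))]
  simp_rw [fun i => integral_fintype_prod_eq_prod (f := fun j x => Real.exp (c i j * x))
    (μ := fun _ : Fin n2 => gaussianReal 0 (Real.toNNReal (σ ^ 2)))]
  have h1 : ∀ t : ℝ, ∫ x, Real.exp (t * x) ∂gaussianReal 0 (Real.toNNReal (σ ^ 2)) =
      Real.exp (σ ^ 2 * t ^ 2 / 2) := fun t => by
    have := mgf_gaussianReal (p := gaussianReal 0 (Real.toNNReal (σ ^ 2))) (X := id)
      (by rw [Measure.map_id]) t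
    simpa [mgf, Real.coe_toNNReal _ (sq_nonneg σ)] using this
  simp_rw [h1, ← Real.exp_sum, frobSq, Finset.mul_sum, Finset.sum_div]

lemma exp_abs_ip_le {n1 n2 : ℕ} (ε c : Fin n1 → Fin n2 → ℝ) :
    Real.exp |ip ε c| ≤ Real.exp (ip ε c) + Real.exp (ip ε (-c)) := by
  have hneg : ip ε (-c) = -ip ε c := by simp [ip]
  rw [hneg]
  rcases abs_choice (ip ε c) with h | h <;> rw [h]
  · linarith [Real.exp_pos (-ip ε c)]
  · linarith [Real.exp_pos (ip ε c)]

lemma measurable_ip {n1 n2 : ℕ} (c : Fin n1 → Fin n2 → ℝ) :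
    Measurable fun ε : Fin n1 → Fin n2 → ℝ => ip ε c := by
  unfold ip
  fun_prop

lemma integrable_exp_abs_ip {n1 n2 : ℕ} (σ : ℝ) (c : Fin n1 → Fin n2 → ℝ) :
    Integrable (fun ε => Real.exp |ip ε c|) (noiseMeasure n1 n2 σ) := by
  refine ((integrable_exp_ip σ c).add (integrable_exp_ip σ (-c))).mono'
    (Real.measurable_exp.comp (measurable_ip c).abs).aestronglyMeasurable (.of_forall fun ε => ?_)
  rw [Real.norm_eq_abs, Real.abs_exp]
  exact exp_abs_ip_le ε c

lemma integral_exp_abs_ip_le {n1 n2 : ℕ} {σ : ℝ} {c : Fin n1 → Fin n2 → ℝ}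
    (hc : σ ^ 2 * frobSq c ≤ 1) :
    ∫ ε, Real.exp |ip ε c| ∂noiseMeasure n1 n2 σ ≤ 4 := by
  have hfrob : frobSq (-c) = frobSq c := by simp [frobSq]
  have hexp : Real.exp (σ ^ 2 * frobSq c / 2) ≤ 2 := by
    have h2 : Real.exp (1 / 2) ≤ 2 := by
      rw [← Real.le_log_iff_exp_le (by norm_num)]
      linarith [Real.log_two_gt_d9]
    exact (Real.exp_le_exp.2 (by linarith)).trans h2
  calc _ ≤ ∫ ε, (Real.exp (ip ε c) + Real.exp (ip ε (-c))) ∂noiseMeasure n1 n2 σ :=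
        integral_mono (integrable_exp_abs_ip σ c)
          ((integrable_exp_ip σ c).add (integrable_exp_ip σ (-c))) (exp_abs_ip_le · c)
    _ ≤ 4 := by
        rw [integral_add (integrable_exp_ip σ c) (integrable_exp_ip σ (-c)), integral_exp_ip,
          integral_exp_ip, hfrob]
        linarith

/-- The weights `1 / (σ √|R|)` on the rectangle `R`, zero elsewhere. -/
def rectWeight (n1 n2 : ℕ) (σ : ℝ) (i₀ i₁ j₀ j₁ : ℕ) (i : Fin n1) (j : Fin n2) : ℝ :=
  if i ∈ finIco n1 i₀ i₁ ∧ j ∈ finIco n2 j₀ j₁ then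
    (σ * √(((finIco n1 i₀ i₁).card : ℝ) * (finIco n2 j₀ j₁).card))⁻¹ else 0

lemma sum_ite_mem_and {n1 n2 : ℕ} (s : Finset (Fin n1)) (t : Finset (Fin n2))
    (f : Fin n1 → Fin n2 → ℝ) :
    ∑ i, ∑ j, (if i ∈ s ∧ j ∈ t then f i j else 0) = ∑ i ∈ s, ∑ j ∈ t, f i j := by
  simp_rw [ite_and]
  have h : ∀ i, ∑ j, (if i ∈ s then (if j ∈ t then f i j else 0) else 0) =
      if i ∈ s then ∑ j ∈ t, f i j else 0 := fun i => by
    split_ifs <;> simp [Finset.sum_ite_mem]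
  simp_rw [h, Finset.sum_ite_mem, Finset.univ_inter]

lemma sq_mul_frobSq_rectWeight_le (σ : ℝ) (n1 n2 i₀ i₁ j₀ j₁ : ℕ) :
    σ ^ 2 * frobSq (rectWeight n1 n2 σ i₀ i₁ j₀ j₁) ≤ 1 := by
  simp only [frobSq, rectWeight, ite_pow, ne_eq, OfNat.ofNat_ne_zero, not_false_eq_true, zero_pow]
  rw [sum_ite_mem_and]
  simp only [Finset.sum_const, nsmul_eq_mul]
  rw [inv_pow, mul_pow, Real.sq_sqrt (by positivity)]
  set a : ℝ := ((finIco n1 i₀ i₁).card : ℝ)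
  set b : ℝ := ((finIco n2 j₀ j₁).card : ℝ)
  have : σ ^ 2 * (a * (b * (σ ^ 2 * (a * b))⁻¹)) = (σ ^ 2 * (a * b)) / (σ ^ 2 * (a * b)) := by
    ring
  rw [this]
  exact div_self_le_one _

lemma abs_sum_finIco_eq {n1 n2 : ℕ} {σ : ℝ} (hσ : 0 < σ) (ε : Fin n1 → Fin n2 → ℝ)
    (i₀ i₁ j₀ j₁ : ℕ) :
    |∑ i ∈ finIco n1 i₀ i₁, ∑ j ∈ finIco n2 j₀ j₁, ε i j| =
      σ * |ip ε (rectWeight n1 n2 σ i₀ i₁ j₀ j₁)| *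
        √(((finIco n1 i₀ i₁).card : ℝ) * (finIco n2 j₀ j₁).card) := by
  have hip : ip ε (rectWeight n1 n2 σ i₀ i₁ j₀ j₁) =
      (∑ i ∈ finIco n1 i₀ i₁, ∑ j ∈ finIco n2 j₀ j₁, ε i j) *
        (σ * √(((finIco n1 i₀ i₁).card : ℝ) * (finIco n2 j₀ j₁).card))⁻¹ := by
    simp only [ip, rectWeight, mul_ite, mul_zero]
    rw [sum_ite_mem_and]
    simp_rw [Finset.sum_mul]
  rw [hip]
  rcases (Nat.zero_le ((finIco n1 i₀ i₁).card * (finIco n2 j₀ j₁).card)).eq_or_lt with h | h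
  · rcases Nat.mul_eq_zero.1 h.symm with h | h <;> rw [Finset.card_eq_zero] at h <;> simp [h]
  · have hpos : 0 < √(((finIco n1 i₀ i₁).card : ℝ) * (finIco n2 j₀ j₁).card) :=
      Real.sqrt_pos.2 (by exact_mod_cast h)
    rw [abs_mul, abs_inv, abs_of_pos (mul_pos hσ hpos)]
    field_simp

/-- The corner coordinates of the rectangles of the `n1 × n2` grid. -/
abbrev RectIndex (n1 n2 : ℕ) : Type :=
  Fin (n1 + 1) × Fin (n1 + 1) × Fin (n2 + 1) × Fin (n2 + 1)

/-- An integrable majorant of the normalized rectangle sums of `ε`. -/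
def rectMajorant {n1 n2 : ℕ} (σ : ℝ) (ε : Fin n1 → Fin n2 → ℝ) : ℝ :=
  σ * (Real.log (Fintype.card (RectIndex n1 n2)) +
    (∑ r : RectIndex n1 n2, Real.exp |ip ε (rectWeight n1 n2 σ r.1 r.2.1 r.2.2.1 r.2.2.2)|) /
      Fintype.card (RectIndex n1 n2))

lemma gridRectBound_rectMajorant {n1 n2 : ℕ} {σ : ℝ} (hσ : 0 < σ) (ε : Fin n1 → Fin n2 → ℝ) :
    GridRectBound ε (rectMajorant σ ε) := by
  intro i₀ i₁ j₀ j₁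
  rw [← finIco_min n1, ← finIco_min n2, abs_sum_finIco_eq hσ]
  refine mul_le_mul_of_nonneg_right (mul_le_mul_of_nonneg_left ?_ hσ.le) (Real.sqrt_nonneg _)
  set N : ℝ := (Fintype.card (RectIndex n1 n2) : ℝ)
  have hN : 0 < N := Nat.cast_pos.2 Fintype.card_pos
  set F : RectIndex n1 n2 → ℝ := fun r =>
    |ip ε (rectWeight n1 n2 σ r.1 r.2.1 r.2.2.1 r.2.2.2)|
  let r : RectIndex n1 n2 := (⟨min i₀ n1, by omega⟩, ⟨min i₁ n1, by omega⟩,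
    ⟨min j₀ n2, by omega⟩, ⟨min j₁ n2, by omega⟩)
  change F r ≤ Real.log N + (∑ r, Real.exp (F r)) / N
  have h1 : Real.exp (F r) ≤ ∑ r, Real.exp (F r) :=
    Finset.single_le_sum (f := fun r => Real.exp (F r)) (fun _ _ => (Real.exp_pos _).le)
      (Finset.mem_univ r)
  have h2 : Real.exp (F r - Real.log N) ≤ (∑ r, Real.exp (F r)) / N := by
    rw [Real.exp_sub, Real.exp_log hN]
    exact div_le_div_of_nonneg_right h1 hN.le
  linarith [Real.add_one_le_exp (F r - Real.log N)]

lemma integrable_rectMajorant (n1 n2 : ℕ) (σ : ℝ) :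
    Integrable (rectMajorant (n1 := n1) (n2 := n2) σ) (noiseMeasure n1 n2 σ) :=
  ((integrable_const _).add ((integrable_finsetSum _ fun _ _ =>
    integrable_exp_abs_ip σ _).div_const _)).const_mul σ

lemma integral_rectMajorant_le (n1 n2 : ℕ) {σ : ℝ} (hσ : 0 < σ) :
    ∫ ε, rectMajorant σ ε ∂noiseMeasure n1 n2 σ ≤
      σ * (Real.log (Fintype.card (RectIndex n1 n2)) + 4) := by
  unfold rectMajorant
  have hsum := integrable_finsetSum (μ := noiseMeasure n1 n2 σ) Finset.univ
    fun (r : RectIndex n1 n2) _ =>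
      integrable_exp_abs_ip σ (rectWeight n1 n2 σ r.1 r.2.1 r.2.2.1 r.2.2.2)
  rw [integral_const_mul, integral_add (integrable_const _) (hsum.div_const _),
    integral_div, integral_finsetSum _ fun r _ => integrable_exp_abs_ip σ _]
  refine mul_le_mul_of_nonneg_left (add_le_add (by simp) ?_) hσ.le
  rw [div_le_iff₀ (Nat.cast_pos.2 Fintype.card_pos)]
  refine (Finset.sum_le_card_nsmul _ _ 4 fun r _ =>
    integral_exp_abs_ip_le (sq_mul_frobSq_rectWeight_le σ _ _ _ _ _ _)).trans ?_
  rw [nsmul_eq_mul, Finset.card_univ, mul_comm]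

lemma integral_iSup_ip_le {n1 n2 : ℕ} (h1 : 0 < n1) (h2 : 0 < n2) {K₁ K₂ : ℕ}
    (hK₁ : n1 < 2 ^ K₁) (hK₂ : n2 < 2 ^ K₂) {σ : ℝ} (hσ : 0 < σ) :
    ∫ ε, (⨆ θ : {θ : Fin n1 → Fin n2 → ℝ // Isotonic θ ∧ frobSq θ ≤ 1}, ip ε θ.1)
      ∂noiseMeasure n1 n2 σ ≤
      2 * (K₁ * K₂ * (5 + 4 * K₁)) * (σ * (Real.log (Fintype.card (RectIndex n1 n2)) + 4)) := by
  have hbound : ∀ (ε : Fin n1 → Fin n2 → ℝ)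
      (θ : {θ : Fin n1 → Fin n2 → ℝ // Isotonic θ ∧ frobSq θ ≤ 1}),
      ip ε θ.1 ≤ 2 * (K₁ * K₂ * (5 + 4 * K₁)) * rectMajorant σ ε := fun ε θ =>
    ((gridRectBound_rectMajorant hσ ε).ip_le_of_isotonic h1 h2 hK₁ hK₂ θ.2.1 θ.2.2).trans_eq
      (by ring)
  let zero : {θ : Fin n1 → Fin n2 → ℝ // Isotonic θ ∧ frobSq θ ≤ 1} :=
    ⟨0, fun _ _ _ _ _ _ => le_rfl, by simp [frobSq]⟩
  have hzero : ∀ ε, ip ε zero.1 = 0 := fun ε => by simp [ip, zero]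
  calc _ ≤ ∫ ε, 2 * (K₁ * K₂ * (5 + 4 * K₁)) * rectMajorant σ ε ∂noiseMeasure n1 n2 σ := by
        refine integral_mono_of_nonneg (.of_forall fun ε => ?_)
          ((integrable_rectMajorant n1 n2 σ).const_mul _) (.of_forall fun ε => ?_)
        · exact (hzero ε).symm.le.trans (le_ciSup (f := fun θ :
            {θ : Fin n1 → Fin n2 → ℝ // Isotonic θ ∧ frobSq θ ≤ 1} => ip ε θ.1)
            ⟨_, Set.forall_mem_range.2 (hbound ε)⟩ zero)
        · exact Real.iSup_le (hbound ε) ((hzero ε).symm.le.trans (hbound ε zero))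
    _ ≤ _ := by
        rw [integral_const_mul]
        exact mul_le_mul_of_nonneg_left (integral_rectMajorant_le n1 n2 hσ) (by positivity)

lemma natLog_two_add_one_le {n : ℕ} (hn : 1 < n) :
    ((Nat.log 2 n + 1 : ℕ) : ℝ) ≤ 3 * Real.log n := by
  have h2 : (0.69 : ℝ) < Real.log 2 := by linarith [Real.log_two_gt_d9]
  have hlog : Real.log 2 ≤ Real.log n := Real.log_le_log (by norm_num) (by exact_mod_cast hn)
  have h := Real.natLog_le_logb n 2
  rw [Real.logb, le_div_iff₀ (by push_cast; linarith)] at h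
  push_cast at h ⊢
  nlinarith [(Nat.cast_nonneg (Nat.log 2 n) : (0 : ℝ) ≤ _)]

lemma log_card_rectIndex_le {n1 n2 : ℕ} (h1 : 1 < n1) (h2 : 1 < n2) :
    Real.log (Fintype.card (RectIndex n1 n2)) ≤ 4 * Real.log (n1 * n2) := by
  have key : ∀ {n : ℕ}, 1 < n → Real.log ((n : ℝ) + 1) ≤ 2 * Real.log n := fun {n} hn => by
    have hn' : (2 : ℝ) ≤ n := by exact_mod_cast hn
    have hpow : 2 * Real.log (n : ℝ) = Real.log ((n : ℝ) ^ 2) := by rw [Real.log_pow]; norm_num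
    rw [hpow]
    exact Real.log_le_log (by positivity) (by nlinarith)
  have hn1 : (n1 : ℝ) ≠ 0 := by positivity
  have hn2 : (n2 : ℝ) ≠ 0 := by positivity
  simp only [RectIndex, Fintype.card_prod, Fintype.card_fin]
  push_cast
  rw [Real.log_mul (by positivity) (by positivity), Real.log_mul (by positivity) (by positivity),
    Real.log_mul (by positivity) (by positivity), Real.log_mul hn1 hn2]
  linarith [key h1, key h2]

/-- The width bound in terms of `log n`. -/
lemma integral_iSup_ip_le_log {n1 n2 : ℕ} (h1 : 1 < n1) (h2 : 1 < n2) {σ : ℝ} (hσ : 0 < σ) :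
    ∫ ε, (⨆ θ : {θ : Fin n1 → Fin n2 → ℝ // Isotonic θ ∧ frobSq θ ≤ 1}, ip ε θ.1)
      ∂noiseMeasure n1 n2 σ ≤
      4000 * σ * (Real.log n1 * Real.log n2 * Real.log (n1 * n2) ^ 2) := by
  have hmain := integral_iSup_ip_le (by omega) (by omega)
    (Nat.lt_pow_succ_log_self one_lt_two n1) (Nat.lt_pow_succ_log_self one_lt_two n2) hσ
  refine hmain.trans ?_
  have hK1 := natLog_two_add_one_le h1
  have hK2 := natLog_two_add_one_le h2
  have hN := log_card_rectIndex_le h1 h2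
  have h2' : (0.69 : ℝ) < Real.log 2 := by linarith [Real.log_two_gt_d9]
  have hl1 : Real.log 2 ≤ Real.log n1 := Real.log_le_log (by norm_num) (by exact_mod_cast h1)
  have hl2 : Real.log 2 ≤ Real.log n2 := Real.log_le_log (by norm_num) (by exact_mod_cast h2)
  have hl : Real.log (n1 * n2) = Real.log n1 + Real.log n2 :=
    Real.log_mul (by positivity) (by positivity)
  simp only [Nat.succ_eq_add_one]
  set K₁ : ℝ := ((Nat.log 2 n1 + 1 : ℕ) : ℝ)
  set K₂ : ℝ := ((Nat.log 2 n2 + 1 : ℕ) : ℝ)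
  set l := Real.log ((n1 : ℝ) * n2)
  set l₁ := Real.log n1
  set l₂ := Real.log n2
  have hK10 : 0 ≤ K₁ := Nat.cast_nonneg _
  have hK20 : 0 ≤ K₂ := Nat.cast_nonneg _
  have hl10 : 0 < l₁ := by linarith
  have hl20 : 0 < l₂ := by linarith
  have e1 : 5 + 4 * K₁ ≤ 17 * l := by linarith
  have e2 : Real.log (Fintype.card (RectIndex n1 n2)) + 4 ≤ 8 * l := by linarith
  calc _ ≤ 2 * (3 * l₁ * (3 * l₂) * (17 * l)) * (σ * (8 * l)) := by
        have : 0 ≤ l := by linarith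
        have : 0 ≤ Real.log (Fintype.card (RectIndex n1 n2)) + 4 := by
          have := Real.log_natCast_nonneg (Fintype.card (RectIndex n1 n2))
          linarith
        gcongr
    _ = 2448 * (σ * (l₁ * l₂ * l ^ 2)) := by ring
    _ ≤ _ := by
        have : 0 ≤ σ * (l₁ * l₂ * l ^ 2) := by positivity
        linarith

/-- **Gaussian width of the isotonic Frobenius unit ball (Section 3.3).** There is a
universal constant `C > 0` such that for all `n1, n2 > 1` and `σ > 0`, with
`A = (log n1)(log n2)` and `B = 4 sqrt((log n1)(log n2))`,
`E sup_{θ ∈ B(0,1)} ⟨ε, θ⟩ ≤ C σ (A (log(B sqrt n))² + 1)`; in particular the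
left-hand side is at most `C σ (log n)⁴`, where `n = n1 n2`. -/
theorem gaussian_width_isotonic_ball :
    ∃ C : ℝ, 0 < C ∧
      ∀ (n1 n2 : ℕ), 1 < n1 → 1 < n2 → ∀ σ : ℝ, 0 < σ →
        (∫ ε, (⨆ θ : {θ : Fin n1 → Fin n2 → ℝ // Isotonic θ ∧ frobSq θ ≤ 1},
            ip ε θ.1) ∂noiseMeasure n1 n2 σ) ≤
          C * σ * (Real.log n1 * Real.log n2 *
            Real.log (4 * Real.sqrt (Real.log n1 * Real.log n2) *
              Real.sqrt (n1 * n2)) ^ 2 + 1) ∧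
        (∫ ε, (⨆ θ : {θ : Fin n1 → Fin n2 → ℝ // Isotonic θ ∧ frobSq θ ≤ 1},
            ip ε θ.1) ∂noiseMeasure n1 n2 σ) ≤
          C * σ * Real.log (n1 * n2) ^ 4 := by
  refine ⟨16000, by norm_num, fun n1 n2 h1 h2 σ hσ => ?_⟩
  have hmain := integral_iSup_ip_le_log h1 h2 hσ
  have h2' : (0.69 : ℝ) < Real.log 2 := by linarith [Real.log_two_gt_d9]
  have hl1 : Real.log 2 ≤ Real.log n1 := Real.log_le_log (by norm_num) (by exact_mod_cast h1)
  have hl2 : Real.log 2 ≤ Real.log n2 := Real.log_le_log (by norm_num) (by exact_mod_cast h2)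
  have hl : Real.log (n1 * n2) = Real.log n1 + Real.log n2 :=
    Real.log_mul (by positivity) (by positivity)
  have hn : (0 : ℝ) < (n1 : ℝ) * n2 := by positivity
  have hB : 1 ≤ 4 * √(Real.log n1 * Real.log n2) := by
    have : (1 / 4 : ℝ) ≤ √(Real.log n1 * Real.log n2) := Real.le_sqrt_of_sq_le (by nlinarith)
    linarith
  have hlogB : Real.log (n1 * n2) / 2 ≤
      Real.log (4 * √(Real.log n1 * Real.log n2) * √(n1 * n2)) := by
    rw [← Real.log_sqrt hn.le]
    exact Real.log_le_log (Real.sqrt_pos.2 hn) (le_mul_of_one_le_left (Real.sqrt_nonneg _) hB)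
  set l := Real.log ((n1 : ℝ) * n2)
  set b := Real.log (4 * √(Real.log n1 * Real.log n2) * √(n1 * n2))
  have hl10 : 0 < Real.log n1 := by linarith
  have hl20 : 0 < Real.log n2 := by linarith
  have hl0 : 0 < l := by linarith
  constructor
  · refine hmain.trans ?_
    have hsq : l ^ 2 ≤ 4 * b ^ 2 := by nlinarith
    calc _ ≤ 4000 * σ * (Real.log n1 * Real.log n2 * (4 * b ^ 2)) := by gcongr
      _ = 16000 * σ * (Real.log n1 * Real.log n2 * b ^ 2) := by ring
      _ ≤ _ := by gcongr; linarith
  · refine hmain.trans ?_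
    calc _ ≤ 16000 * σ * (l * l * l ^ 2) := by gcongr <;> linarith
      _ = _ := by ring
end
end

section
/- Let θ ∈ C_{n1} be a nondecreasing vector with D = (θ_{n1} − θ_1)² and let 0 < δ ≤ sqrt(D). Then there exists a nondecreasing vector θ' ∈ C_{n1} such that (1/n1)·||θ − θ'||² ≤ δ² and the number of distinct values of θ' is at most 2·sqrt(D)/δ. -/
noncomputable section

/-- The number of distinct values of a vector. -/
def kVec {m : ℕ} (θ : Fin m → ℝ) : ℕ := (Finset.image θ Finset.univ).card

/-- **Monotone vector approximation lemma (Lemma B.1 of Chatterjee–Guntuboyina–Sen).**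
Let `θ ∈ C_{n1}` be nondecreasing with `D = (θ_{n1} − θ_1)²`, and let
`0 < δ ≤ sqrt D`. Then there is a nondecreasing `θ' ∈ C_{n1}` with
`(1/n1)‖θ − θ'‖² ≤ δ²` and at most `2 sqrt D / δ` distinct values. -/
theorem monotone_vector_approximation
    {n1 : ℕ} (hn1 : 0 < n1) (θ : Fin n1 → ℝ) (hθ : Monotone θ)
    (D : ℝ) (hDdef : D = (θ ⟨n1 - 1, Nat.sub_lt hn1 one_pos⟩ - θ ⟨0, hn1⟩) ^ 2)
    (δ : ℝ) (hδ : 0 < δ) (hδD : δ ≤ Real.sqrt D) :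
    ∃ θ' : Fin n1 → ℝ, Monotone θ' ∧
      (∑ i, (θ i - θ' i) ^ 2) / n1 ≤ δ ^ 2 ∧
      (kVec θ' : ℝ) ≤ 2 * Real.sqrt D / δ := by
  set a := θ ⟨0, hn1⟩
  set b := θ ⟨n1 - 1, Nat.sub_lt hn1 one_pos⟩
  have lower (i : Fin n1) : a ≤ θ i := hθ (Fin.mk_le_of_le_val (Nat.zero_le _))
  have upper (i : Fin n1) : θ i ≤ b := hθ (Fin.le_def.2 (Nat.le_sub_one_of_lt i.isLt))
  have hsqrt : Real.sqrt D = b - a := by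
    rw [hDdef, Real.sqrt_sq (sub_nonneg.2 (lower _))]
  rw [hsqrt] at hδD ⊢
  -- Round each coordinate down to the grid of mesh `δ` starting at the smallest value.
  refine ⟨fun i => a + δ * ⌊(θ i - a) / δ⌋₊, fun i j hij => ?_, ?_, ?_⟩
  · have := hθ hij
    dsimp only
    gcongr
  · have hterm (i : Fin n1) : (θ i - (a + δ * ⌊(θ i - a) / δ⌋₊)) ^ 2 ≤ δ ^ 2 := by
      have hfloor : (⌊(θ i - a) / δ⌋₊ : ℝ) ≤ (θ i - a) / δ :=
        Nat.floor_le (div_nonneg (sub_nonneg.2 (lower i)) hδ.le)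
      have hlt := Nat.lt_floor_add_one ((θ i - a) / δ)
      rw [le_div_iff₀ hδ] at hfloor
      rw [div_lt_iff₀ hδ] at hlt
      exact pow_le_pow_left₀ (by linarith) (by linarith) 2
    rw [div_le_iff₀ (Nat.cast_pos.2 hn1)]
    calc ∑ i, (θ i - (a + δ * ⌊(θ i - a) / δ⌋₊)) ^ 2
        ≤ ∑ _i : Fin n1, δ ^ 2 := Finset.sum_le_sum fun i _ => hterm i
      _ = δ ^ 2 * n1 := by simp [mul_comm]
  · have hcard : kVec (fun i => a + δ * ⌊(θ i - a) / δ⌋₊) ≤ ⌊(b - a) / δ⌋₊ + 1 := by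
      have hsub : Finset.image (fun i => a + δ * (⌊(θ i - a) / δ⌋₊ : ℝ)) Finset.univ ⊆
          Finset.image (fun m : ℕ => a + δ * (m : ℝ))
            (Finset.range (⌊(b - a) / δ⌋₊ + 1)) := by
        refine Finset.image_subset_iff.2 fun i _ => Finset.mem_image_of_mem _ ?_
        have := upper i
        rw [Finset.mem_range, Nat.lt_succ_iff]
        gcongr
      exact (Finset.card_le_card hsub).trans
        (Finset.card_image_le.trans (Finset.card_range _).le)
    have hone : 1 ≤ (b - a) / δ := (one_le_div₀ hδ).2 hδD
    have hfloor : (⌊(b - a) / δ⌋₊ : ℝ) ≤ (b - a) / δ := Nat.floor_le (by linarith)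
    calc (kVec (fun i => a + δ * ⌊(θ i - a) / δ⌋₊) : ℝ)
        ≤ ⌊(b - a) / δ⌋₊ + 1 := by exact_mod_cast hcard
      _ ≤ 2 * ((b - a) / δ) := by linarith
      _ = 2 * (b - a) / δ := (mul_div_assoc _ _ _).symm
end
end
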